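/- Let ν be the unique invariant σ-finite measure of the chain Y, normalized by F_ν(x₀) = 1. Then there exist constants m_ζ > 0, c_ζ ∈ ℝ and ρ_ζ ∈ (0,1) such that F_ν(x) = m_ζ x + c_ζ + O(e^{−ρ_ζ x}) as x → ∞. -/

import Mathlib

open MeasureTheory ProbabilityTheory Real Filter Set
open scoped ENNReal

noncomputable def hkfun (k x : ℝ) : ℝ :=
  Real.log ((Real.exp (-k) + Real.exp x) / (1 + Real.exp (x - k)))

noncomputable def hY (y : ℝ) : ℝ := y + Real.log (1 + Real.exp (-y))

/-- A σ-finite measure ν is invariant for the chain Y_{n+1} = z_{n+1} + hY (Y_n),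
where the increments have density ζ. -/
def IsInvariantY (ζ : ℝ → ℝ) (ν : Measure ℝ) : Prop :=
  ∀ g : ℝ → ℝ≥0∞, Measurable g →
    ∫⁻ z, g z ∂ν = ∫⁻ y, ∫⁻ z, g (z + hY y) * ENNReal.ofReal (ζ z) ∂volume ∂ν


lemma aux_integrable_exp_neg_abs {c : ℝ} (hc : 0 < c) :
    Integrable (fun x : ℝ => Real.exp (-c * |x|)) := by
  rw [← integrableOn_univ, ← Iic_union_Ioi (a := (0:ℝ))]
  refine IntegrableOn.union ?_ ?_
  · refine (integrableOn_exp_mul_Iic hc 0).congr_fun ?_ measurableSet_Iic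
    intro x hx
    simp only [mem_Iic] at hx
    simp [abs_of_nonpos hx]
  · refine (integrableOn_exp_mul_Ioi (a := -c) (by linarith) 0).congr_fun ?_ measurableSet_Ioi
    intro x hx
    simp only [mem_Ioi] at hx
    simp [abs_of_pos hx]

lemma aux_integrable_exp_neg_abs_sub {c : ℝ} (hc : 0 < c) (R : ℝ) :
    Integrable (fun x : ℝ => Real.exp (-c * |x - R|)) :=
  (aux_integrable_exp_neg_abs hc).comp_sub_right R

/-- pointwise exponential decay of the density -/
lemma aux_zeta_decay (ζ : ℝ → ℝ) (hζmeas : Measurable ζ) (hζnn : ∀ x, 0 ≤ ζ x)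
    (hζint : Integrable ζ)
    (hζprob : ∫ x, ζ x = 1)
    (δ : ℝ) (hδ : 0 < δ) (Cδ : ℝ)
    (htail : ∀ x : ℝ, 0 ≤ x → ∫ y in {y : ℝ | x < |y|}, ζ y ≤ Cδ * Real.exp (-δ * x))
    (θ : ℝ) (hθ0 : 0 < θ) (Cθ : ℝ)
    (hHolder : ∀ x y : ℝ, |ζ x - ζ y| ≤ Cθ * |x - y| ^ θ) :
    ∃ C > 0, ∃ d > 0, ∀ x, ζ x ≤ C * Real.exp (-d * |x|) := by
  set K := max Cθ 1 with hK
  have hK1 : 1 ≤ K := le_max_right _ _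
  have hK0 : 0 < K := by linarith
  set M := max Cδ 1 * Real.exp (2 * δ) with hM
  have hM0 : 0 < M := by positivity
  -- mass of neighbourhood
  have mass : ∀ x ρ : ℝ, 0 < ρ → ρ ≤ 1 → ∫ y in Icc (x - ρ) (x + ρ), ζ y ≤ M * Real.exp (-δ * |x|) := by
    intro x ρ hρ0 hρ1
    by_cases hx : 2 ≤ |x|
    · calc ∫ y in Icc (x - ρ) (x + ρ), ζ y ≤ ∫ y in {y : ℝ | |x| - 2 < |y|}, ζ y := by
            apply setIntegral_mono_set hζint.integrableOn (ae_of_all _ hζnn)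
            apply LE.le.eventuallyLE
            intro y hy
            simp only [mem_Icc, mem_ofPred_eq] at *
            have : |x| ≤ |y| + |x - y| := by
              have := abs_add_le y (x - y); simpa using this
            have : |x - y| ≤ 1 := by rw [abs_le]; constructor <;> linarith
            linarith
        _ ≤ Cδ * Real.exp (-δ * (|x| - 2)) := htail _ (by linarith)
        _ ≤ max Cδ 1 * Real.exp (-δ * (|x| - 2)) := by gcongr; exact le_max_left _ _
        _ = M * Real.exp (-δ * |x|) := by rw [hM, mul_assoc, ← Real.exp_add]; ring_nf
    · calc ∫ y in Icc (x - ρ) (x + ρ), ζ y ≤ ∫ y, ζ y :=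
            setIntegral_le_integral hζint (ae_of_all _ hζnn)
        _ = 1 * 1 := by rw [hζprob]; ring
        _ ≤ max Cδ 1 * Real.exp (2 * δ + -δ * |x|) := by
            gcongr
            · exact le_max_right _ _
            · apply Real.one_le_exp
              nlinarith
        _ = M * Real.exp (-δ * |x|) := by rw [hM, mul_assoc, ← Real.exp_add]
  have key : ∀ x ρ : ℝ, 0 < ρ → ρ ≤ 1 → K * ρ ^ θ ≤ ζ x / 2 → ζ x * ρ ≤ M * Real.exp (-δ * |x|) := by
    intro x ρ hρ0 hρ1 h
    refine le_trans ?_ (mass x ρ hρ0 hρ1)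
    have : ∫ y in Icc (x - ρ) (x + ρ), ζ x / 2 ≤ ∫ y in Icc (x - ρ) (x + ρ), ζ y := by
      apply setIntegral_mono_on _ hζint.integrableOn measurableSet_Icc
      · intro y hy
        simp only [mem_Icc] at hy
        have h1 := hHolder x y
        have h2 : |x - y| ≤ ρ := by rw [abs_le]; constructor <;> linarith
        have h3 : |x - y| ^ θ ≤ ρ ^ θ := Real.rpow_le_rpow (abs_nonneg _) h2 hθ0.le
        have h4 : Cθ * |x - y| ^ θ ≤ K * ρ ^ θ := by
          have : 0 ≤ |x - y| ^ θ := by positivity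
          calc Cθ * |x - y| ^ θ ≤ K * |x - y| ^ θ := by gcongr; exact le_max_left _ _
            _ ≤ _ := by gcongr
        have := le_abs_self (ζ x - ζ y)
        linarith
      · simp
    rw [setIntegral_const] at this
    simp only [Measure.real, Real.volume_Icc, smul_eq_mul] at this
    rw [ENNReal.toReal_ofReal (by linarith)] at this
    linarith
  set e := 1 + 1 / θ with he
  have he1 : 1 < e := by rw [he]; have : 0 < 1 / θ := by positivity
                         linarith
  have he0 : 0 < e := by linarith
  refine ⟨M + (M * (2 * K) ^ (1 / θ)) ^ (1 / e), by positivity, δ / e, by positivity, ?_⟩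
  intro x
  have hexp : Real.exp (-δ * |x|) ≤ Real.exp (-(δ / e) * |x|) := by
    apply Real.exp_le_exp.2
    have : δ / e ≤ δ := div_le_self hδ.le he1.le
    nlinarith [abs_nonneg x]
  have hpos : 0 < (M * (2 * K) ^ (1 / θ)) ^ (1 / e) := by positivity
  rcases (hζnn x).eq_or_lt with h0 | h0
  · rw [← h0]; positivity
  by_cases hc : 1 ≤ (ζ x / (2 * K)) ^ (1 / θ)
  · have hb : 1 ≤ ζ x / (2 * K) := by
      by_contra hcon
      push Not at hcon
      have := Real.rpow_lt_one (by positivity) hcon (by positivity : 0 < 1 / θ)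
      linarith
    have := key x 1 one_pos le_rfl (by
      rw [Real.one_rpow]
      rw [le_div_iff₀ (by positivity)] at hb
      linarith)
    calc ζ x ≤ M * Real.exp (-δ * |x|) := by linarith
      _ ≤ M * Real.exp (-(δ / e) * |x|) := by gcongr
      _ ≤ _ := by
        have := Real.exp_pos (-(δ / e) * |x|)
        nlinarith
  · push Not at hc
    have h1 := key x ((ζ x / (2 * K)) ^ (1 / θ)) (by positivity) hc.le (by
      rw [← Real.rpow_mul (by positivity)]
      rw [one_div_mul_cancel hθ0.ne', Real.rpow_one]
      field_simp; rfl)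
    rw [Real.div_rpow h0.le (by positivity)] at h1
    have h2 : ζ x ^ e ≤ M * (2 * K) ^ (1 / θ) * Real.exp (-δ * |x|) := by
      rw [he, Real.rpow_add h0, Real.rpow_one]
      have hp : 0 < (2 * K) ^ (1 / θ) := by positivity
      rw [← mul_div_assoc, div_le_iff₀ hp] at h1
      linarith
    have h3 := Real.rpow_le_rpow (by positivity) h2 (by positivity : 0 ≤ 1 / e)
    rw [← Real.rpow_mul h0.le, mul_one_div_cancel he0.ne', Real.rpow_one,
      Real.mul_rpow (by positivity) (by positivity), ← Real.exp_mul] at h3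
    have h4 : -δ * |x| * (1 / e) = -(δ / e) * |x| := by ring
    rw [h4] at h3
    have := Real.exp_pos (-(δ / e) * |x|)
    nlinarith


lemma hY_eq (y : ℝ) : hY y = Real.log (1 + Real.exp y) := by
  have h : 1 + Real.exp y = Real.exp y * (1 + Real.exp (-y)) := by
    rw [mul_add, ← Real.exp_add]; simp [add_comm]
  rw [h, Real.log_mul (Real.exp_pos _).ne' (by positivity), Real.log_exp, hY]

lemma exp_hY (y : ℝ) : Real.exp (hY y) = 1 + Real.exp y := by
  rw [hY_eq, Real.exp_log (by positivity)]

lemma hY_pos (y : ℝ) : 0 < hY y := by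
  rw [hY_eq]; apply Real.log_pos; have := Real.exp_pos y; linarith

lemma lt_hY (y : ℝ) : y < hY y := by
  rw [← Real.exp_lt_exp, exp_hY]; linarith

lemma hY_strictMono : StrictMono hY := by
  intro a b h
  rw [← Real.exp_lt_exp, exp_hY, exp_hY]
  have := Real.exp_lt_exp.2 h
  linarith

lemma hY_meas : Measurable hY := hY_strictMono.monotone.measurable

lemma hY_le (y : ℝ) : hY y ≤ |y| + 1 := by
  rw [← Real.exp_le_exp, exp_hY, Real.exp_add]
  have h1 : Real.exp y ≤ Real.exp |y| := Real.exp_le_exp.2 (le_abs_self y)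
  have h2 : 1 ≤ Real.exp |y| := Real.one_le_exp (abs_nonneg y)
  have h3 : 2 ≤ Real.exp 1 := by have := Real.add_one_le_exp (1:ℝ); linarith
  nlinarith

lemma hY_sub_le (y : ℝ) : hY y - max y 0 ≤ 2 * Real.exp (-hY y) := by
  rw [Real.exp_neg, exp_hY]
  have key : hY y - max y 0 ≤ Real.exp (-|y|) := by
    rcases le_total 0 y with h | h
    · rw [max_eq_left h, abs_of_nonneg h, hY]
      have := Real.log_le_sub_one_of_pos (show 0 < 1 + Real.exp (-y) by positivity)
      linarith
    · rw [max_eq_right h, abs_of_nonpos h, hY_eq]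
      have := Real.log_le_sub_one_of_pos (show 0 < 1 + Real.exp (y) by positivity)
      simp only [neg_neg]
      linarith
  refine key.trans ?_
  rw [← div_eq_mul_inv, le_div_iff₀ (by positivity)]
  rcases le_total 0 y with h | h
  · rw [abs_of_nonneg h, mul_add, ← Real.exp_add]
    have : Real.exp (-y) ≤ 1 := Real.exp_le_one_iff.2 (by linarith)
    simp; linarith
  · rw [abs_of_nonpos h]
    have : Real.exp (y) ≤ 1 := Real.exp_le_one_iff.2 (by linarith)
    have := Real.exp_pos y
    simp only [neg_neg]; nlinarith

lemma aux_gronwall (t : ℕ → ℝ) (ht : ∀ n, 0 ≤ t n) (hm : Monotone t) (C q : ℝ) (hC : 0 ≤ C)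
    (hq0 : 0 < q) (hq1 : q < 1) (h : ∀ n, t (n + 1) - t n ≤ C * q ^ n * t (n + 1)) :
    ∃ K, ∀ n, t n ≤ K := by
  obtain ⟨J, hJ⟩ : ∃ J : ℕ, C * q ^ J / (1 - q) ≤ 1 / 2 := by
    have : Tendsto (fun n : ℕ => C * q ^ n / (1 - q)) atTop (nhds (C * 0 / (1 - q))) :=
      ((tendsto_pow_atTop_nhds_zero_of_lt_one hq0.le hq1).const_mul C).div_const _
    rw [mul_zero, zero_div] at this
    exact ((this.eventually_le_const (show (0:ℝ) < 1 / 2 by norm_num))).exists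
  have key : ∀ n, t (J + n) - t J ≤ C * q ^ J * ((1 - q ^ n) / (1 - q)) * t (J + n) := by
    intro n
    induction n with
    | zero => simp
    | succ n ih =>
      have h1 := h (J + n)
      have h2 : t (J + n) ≤ t (J + n + 1) := hm (Nat.le_succ _)
      have hq' : 0 < 1 - q := by linarith
      have h3 : C * q ^ J * ((1 - q ^ n) / (1 - q)) * t (J + n) ≤
          C * q ^ J * ((1 - q ^ n) / (1 - q)) * t (J + n + 1) := by
        have : 0 ≤ 1 - q ^ n := by have := pow_le_one₀ (n := n) hq0.le hq1.le; linarith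
        gcongr
      have h4 : C * q ^ J * ((1 - q ^ (n+1)) / (1 - q)) = C * q ^ J * ((1 - q ^ n) / (1 - q)) + C * q ^ (J + n) := by
        field_simp; ring
      rw [← add_assoc, h4, add_mul]
      linarith
  refine ⟨2 * t J, fun n => ?_⟩
  have hq' : 0 < 1 - q := by linarith
  have h1 := key n
  have h2 : C * q ^ J * ((1 - q ^ n) / (1 - q)) ≤ 1 / 2 := by
    refine le_trans ?_ hJ
    rw [← mul_div_assoc]
    apply div_le_div_of_nonneg_right _ hq'.le
    have : 0 < q ^ n := by positivity
    have h0 : 0 ≤ C * q ^ J := by positivity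
    nlinarith
  have h3 : t (J + n) ≤ 2 * t J := by nlinarith [ht (J + n)]
  exact (hm (Nat.le_add_left n J)).trans h3

lemma aux_int_of_exp {l : Measure ℝ} {d : ℝ} (hd : 0 < d) [IsFiniteMeasure l]
    (hexp : Integrable (fun z : ℝ => Real.exp (d * |z|)) l) : Integrable (fun z : ℝ => z) l := by
  refine (hexp.const_mul (1 / d)).mono' (by fun_prop) (ae_of_all _ fun z => ?_)
  have := Real.add_one_le_exp (d * |z|)
  rw [Real.norm_eq_abs, one_div, inv_mul_eq_div, le_div_iff₀ hd]
  linarith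

lemma aux_apriori (l : Measure ℝ) [IsProbabilityMeasure l] (d : ℝ) (hd : 0 < d)
    (hexp : Integrable (fun z : ℝ => Real.exp (d * |z|)) l) (hmean : ∫ z, z ∂l = 0)
    (hpos : 0 < ∫ z, max z 0 ∂l)
    (ν : Measure ℝ) (hinv : ∀ g : ℝ → ℝ≥0∞, Measurable g →
      ∫⁻ z, g z ∂ν = ∫⁻ y, ∫⁻ z, g (z + hY y) ∂l ∂ν) (hfin : ∀ x : ℝ, ν (Set.Iic x) < ⊤)
    (η : ℝ) (hη : 0 < η) (hη1 : η ≤ 1) (hηd : η ≤ d) :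
    ∫⁻ y, ENNReal.ofReal (Real.exp (-η * hY y)) ∂ν < ⊤ := by
  have hid := aux_int_of_exp hd hexp
  set κ := (∫ z, max z 0 ∂l) / 2 with hκ
  have hκ0 : 0 < κ := by positivity
  set E := ∫ z, Real.exp (d * |z|) ∂l with hE
  have hE0 : 0 ≤ E := integral_nonneg fun z => (Real.exp_pos _).le
  set C3 := E / η + 2 with hC3
  have hC30 : 0 < C3 := by positivity
  have hintp : ∀ b : ℝ, Integrable (fun z => max (z - b) 0) l := fun b =>
    (hid.sub (integrable_const b)).pos_part
  have hintn : ∀ b : ℝ, Integrable (fun z => max (-b - z) 0) l := fun b =>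
    ((integrable_const (-b)).sub hid).pos_part
  have hell : ∀ b ≤ κ, κ ≤ ∫ z, max (z - b) 0 ∂l := by
    intro b hb
    have h1 : ∫ z, (max z 0 - κ) ∂l ≤ ∫ z, max (z - b) 0 ∂l := by
      apply integral_mono (hid.pos_part.sub (integrable_const _)) (hintp b)
      intro z
      show max z 0 - κ ≤ max (z - b) 0
      rcases le_total z 0 with h | h
      · simp only [max_eq_right h]
        have := le_max_right (z - b) 0
        linarith
      · simp only [max_eq_left h]
        have := le_max_left (z - b) 0
        linarith
    rw [integral_sub hid.pos_part (integrable_const _)] at h1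
    simp only [integral_const, probReal_univ, one_smul] at h1
    linarith
  have hee : ∀ H : ℝ, ∫ z, max (-H - z) 0 ∂l ≤ E / η * Real.exp (-η * H) := by
    intro H
    have h1 : ∫ z, max (-H - z) 0 ∂l ≤ ∫ z, (1 / η * Real.exp (-η * H)) * Real.exp (d * |z|) ∂l := by
      apply integral_mono (hintn H) (hexp.const_mul _)
      intro z
      simp only
      apply max_le _ (by positivity)
      have h1 := Real.add_one_le_exp (η * (-H - z))
      have h2 : Real.exp (η * (-H - z)) ≤ Real.exp (-η * H) * Real.exp (d * |z|) := by
        rw [← Real.exp_add]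
        apply Real.exp_le_exp.2
        have : -z ≤ |z| := neg_le_abs z
        nlinarith [abs_nonneg z]
      rw [mul_assoc, one_div, inv_mul_eq_div, le_div_iff₀ hη]
      linarith
    rw [integral_const_mul] at h1
    refine h1.trans (le_of_eq ?_)
    rw [← hE]; ring
  -- the test function
  let g : ℝ → ℝ → ℝ := fun B t => max (B - t) 0 - max (-t) 0
  have hgm : ∀ B, Measurable (g B) := fun B => by fun_prop
  have hg0 : ∀ B, 0 ≤ B → ∀ t, 0 ≤ g B t := by
    intro B hB t
    simp only [g, sub_nonneg]
    exact max_le_max (by linarith) le_rfl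
  have hgB : ∀ B, 0 ≤ B → ∀ t, g B t ≤ B := by
    intro B hB t
    simp only [g]
    have h1 := le_max_left (-t) 0
    have h2 := le_max_right (-t) 0
    have : max (B - t) 0 ≤ B + max (-t) 0 := max_le (by linarith) (by linarith)
    linarith
  have hgi : ∀ B H, Integrable (fun z => g B (z + H)) l := by
    intro B H
    have h1 := hintn (H - B)
    have h2 := hintn H
    refine (h1.sub h2).congr (ae_of_all _ fun z => ?_)
    simp only [g, Pi.sub_apply]
    ring_nf
  have hPg : ∀ B H, ∫ z, g B (z + H) ∂l = (B - H) + ∫ z, max (z - (B - H)) 0 ∂l - ∫ z, max (-H - z) 0 ∂l := by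
    intro B H
    have h1 : ∀ z, g B (z + H) = ((B - H) - z) + max (z - (B - H)) 0 - max (-H - z) 0 := by
      intro z
      have h2 : max (B - (z + H)) 0 = ((B - H) - z) + max (z - (B - H)) 0 := by
        rcases le_total z (B - H) with h | h
        · rw [max_eq_left (by linarith), max_eq_right (by linarith)]; ring
        · rw [max_eq_right (by linarith), max_eq_left (by linarith)]; ring
      have h3 : -(z + H) = -H - z := by ring
      simp only [g, h2, h3]
    simp_rw [h1]
    have hi1 : Integrable (fun z => (B - H) - z) l := (integrable_const (B - H)).sub hid
    have hi2 : Integrable (fun z => (B - H) - z + max (z - (B - H)) 0) l := hi1.add (hintp _)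
    rw [integral_sub hi2 (hintn _), integral_add hi1 (hintp _),
      integral_sub (integrable_const _) hid, hmean]
    simp
  have hpt : ∀ B, 0 ≤ B → ∀ y ≤ B, g B y + (Icc (B - κ) B).indicator (fun _ => κ) y ≤
      ∫ z, g B (z + hY y) ∂l + C3 * Real.exp (-η * hY y) := by
    intro B hB y hy
    rw [hPg]
    have h1 := hee (hY y)
    have h2 := hY_sub_le y
    have h3 : Real.exp (-hY y) ≤ Real.exp (-η * hY y) := by
      apply Real.exp_le_exp.2
      nlinarith [hY_pos y]
    have h4 : g B y = B - max y 0 := by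
      simp only [g]
      rw [max_eq_left (by linarith : 0 ≤ B - y)]
      rcases le_total y 0 with h | h
      · rw [max_eq_left (by linarith : 0 ≤ -y), max_eq_right h]; ring
      · rw [max_eq_right (by linarith : -y ≤ 0), max_eq_left h]; ring
    have h5 : (Icc (B - κ) B).indicator (fun _ => κ) y ≤ ∫ z, max (z - (B - hY y)) 0 ∂l := by
      by_cases hm : y ∈ Icc (B - κ) B
      · rw [indicator_of_mem hm]
        apply hell
        have := lt_hY y
        have := hm.1
        linarith
      · rw [indicator_of_notMem hm]
        exact integral_nonneg fun z => le_max_right _ _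
    rw [h4, hC3, add_mul]
    linarith
  let T : ℝ → ℝ≥0∞ := fun B => ∫⁻ y in Iic B, ENNReal.ofReal (Real.exp (-η * hY y)) ∂ν
  have hTle : ∀ B, T B ≤ ν (Iic B) := by
    intro B
    calc T B ≤ ∫⁻ y in Iic B, 1 ∂ν := by
          apply lintegral_mono
          intro y
          simp only [ENNReal.ofReal_le_one]
          apply Real.exp_le_one_iff.2
          nlinarith [hY_pos y]
      _ = ν (Iic B) := by simp
  have hTfin : ∀ B, T B < ⊤ := fun B => (hTle B).trans_lt (hfin B)
  have hmain : ∀ B, 0 ≤ B → ENNReal.ofReal κ * ν (Icc (B - κ) B) ≤ ENNReal.ofReal C3 * T B := by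
    intro B hB
    have hi := hinv (fun t => ENNReal.ofReal (g B t)) (hgm B).ennreal_ofReal
    have hleft : ∫⁻ z, ENNReal.ofReal (g B z) ∂ν = ∫⁻ z in Iic B, ENNReal.ofReal (g B z) ∂ν := by
      rw [← lintegral_indicator measurableSet_Iic]
      apply lintegral_congr
      intro z
      by_cases hz : z ≤ B
      · rw [indicator_of_mem (by exact hz)]
      · rw [indicator_of_notMem (by exact hz)]
        simp only [g]
        push Not at hz
        rw [max_eq_right (by linarith), max_eq_right (by linarith)]; simp
    have hleftfin : ∫⁻ z in Iic B, ENNReal.ofReal (g B z) ∂ν ≠ ⊤ := by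
      apply ne_of_lt
      calc ∫⁻ z in Iic B, ENNReal.ofReal (g B z) ∂ν ≤ ∫⁻ z in Iic B, ENNReal.ofReal B ∂ν := by
            apply lintegral_mono; intro z; exact ENNReal.ofReal_le_ofReal (hgB B hB z)
        _ = ENNReal.ofReal B * ν (Iic B) := by simp
        _ < ⊤ := ENNReal.mul_lt_top ENNReal.ofReal_lt_top (hfin B)
    have hPe : ∀ y, ∫⁻ z, ENNReal.ofReal (g B (z + hY y)) ∂l = ENNReal.ofReal (∫ z, g B (z + hY y) ∂l) :=
      fun y => (ofReal_integral_eq_lintegral_ofReal (hgi B _) (ae_of_all _ fun z => hg0 B hB _)).symm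
    have h1 : ∫⁻ y in Iic B, (ENNReal.ofReal (g B y) + ENNReal.ofReal ((Icc (B - κ) B).indicator (fun _ => κ) y)) ∂ν ≤
        ∫⁻ y in Iic B, (∫⁻ z, ENNReal.ofReal (g B (z + hY y)) ∂l + ENNReal.ofReal C3 * ENNReal.ofReal (Real.exp (-η * hY y))) ∂ν := by
      apply setLIntegral_mono' measurableSet_Iic
      intro y hy
      rw [hPe, ← ENNReal.ofReal_mul hC30.le, ← ENNReal.ofReal_add (hg0 B hB y) (indicator_nonneg (fun _ _ => hκ0.le) _),
        ← ENNReal.ofReal_add (integral_nonneg fun z => hg0 B hB _) (by positivity)]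
      exact ENNReal.ofReal_le_ofReal (hpt B hB y hy)
    have hm1 : Measurable fun y => ENNReal.ofReal (Real.exp (-η * hY y)) := by
      have := hY_meas
      fun_prop
    rw [lintegral_add_left (hgm B).ennreal_ofReal, lintegral_add_right _ (hm1.const_mul _),
      lintegral_const_mul _ hm1] at h1
    have h2 : ∫⁻ y in Iic B, ∫⁻ z, ENNReal.ofReal (g B (z + hY y)) ∂l ∂ν ≤ ∫⁻ z in Iic B, ENNReal.ofReal (g B z) ∂ν := by
      rw [← hleft, hi]
      exact setLIntegral_le_lintegral _ _
    have h3 := h1.trans (add_le_add_left h2 _)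
    have h4 := (ENNReal.add_le_add_iff_left hleftfin).1 h3
    refine le_trans (le_of_eq ?_) h4
    have : ∀ y, ENNReal.ofReal ((Icc (B - κ) B).indicator (fun _ => κ) y) = (Icc (B - κ) B).indicator (fun _ => ENNReal.ofReal κ) y := by
      intro y
      by_cases hm : y ∈ Icc (B - κ) B
      · rw [indicator_of_mem hm, indicator_of_mem hm]
      · rw [indicator_of_notMem hm, indicator_of_notMem hm]; simp
    simp_rw [this]
    rw [lintegral_indicator measurableSet_Icc, Measure.restrict_restrict measurableSet_Icc,
      inter_eq_left.2 (fun y hy => hy.2)]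
    simp
  -- Gronwall
  have hstep : ∀ B, 0 ≤ B → (T B).toReal - (T (B - κ)).toReal ≤ (C3 / κ * Real.exp (-η * (B - κ))) * (T B).toReal := by
    intro B hB
    have hsplit : T B ≤ T (B - κ) + ENNReal.ofReal (Real.exp (-η * (B - κ))) * ν (Icc (B - κ) B) := by
      have : Iic B ⊆ Iic (B - κ) ∪ Icc (B - κ) B := by
        intro y hy
        rcases le_total y (B - κ) with h | h
        · left; exact h
        · right; exact ⟨h, hy⟩
      refine (lintegral_mono_set this).trans ((lintegral_union_le _ _ _).trans ?_)
      gcongr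
      rw [← setLIntegral_const]
      apply setLIntegral_mono' measurableSet_Icc
      intro y hy
      apply ENNReal.ofReal_le_ofReal
      apply Real.exp_le_exp.2
      have := lt_hY y
      have := hy.1
      nlinarith
    have hνf : ν (Icc (B - κ) B) < ⊤ := (measure_mono (fun y hy => hy.2)).trans_lt (hfin B)
    have h1 := ENNReal.toReal_mono (ENNReal.add_ne_top.2 ⟨(hTfin _).ne, (ENNReal.mul_lt_top ENNReal.ofReal_lt_top hνf).ne⟩) hsplit
    rw [ENNReal.toReal_add (hTfin _).ne (ENNReal.mul_lt_top ENNReal.ofReal_lt_top hνf).ne, ENNReal.toReal_mul,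
      ENNReal.toReal_ofReal (Real.exp_pos _).le] at h1
    have h2 := ENNReal.toReal_mono (ENNReal.mul_lt_top ENNReal.ofReal_lt_top (hTfin B)).ne (hmain B hB)
    rw [ENNReal.toReal_mul, ENNReal.toReal_mul, ENNReal.toReal_ofReal hκ0.le, ENNReal.toReal_ofReal hC30.le] at h2
    have h3 : (ν (Icc (B - κ) B)).toReal ≤ C3 / κ * (T B).toReal := by
      rw [div_mul_eq_mul_div, le_div_iff₀ hκ0]; linarith
    have h4 := mul_le_mul_of_nonneg_left h3 (Real.exp_pos (-η * (B - κ))).le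
    linarith
  have hTmono : Monotone T := fun a b hab => lintegral_mono_set (Iic_subset_Iic.2 hab)
  obtain ⟨K, hK⟩ := aux_gronwall (fun n => (T (n * κ)).toReal) (fun n => ENNReal.toReal_nonneg)
    (by
      intro a b hab
      apply ENNReal.toReal_mono (hTfin _).ne
      apply hTmono
      gcongr) (C3 / κ) (Real.exp (-η * κ)) (by positivity) (Real.exp_pos _)
    (by rw [Real.exp_lt_one_iff]; nlinarith) (by
      intro n
      have h := hstep ((n + 1 : ℕ) * κ) (by positivity)
      have h1 : ((n + 1 : ℕ) : ℝ) * κ - κ = n * κ := by push_cast; ring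
      rw [h1] at h
      rw [← Real.exp_nat_mul]
      have h2 : (n : ℝ) * (-η * κ) = -η * (n * κ) := by ring
      rw [h2]
      exact h)
  have hU : (⋃ n : ℕ, Iic ((n : ℝ) * κ)) = univ := by
    apply eq_univ_of_forall
    intro x
    obtain ⟨n, hn⟩ := exists_nat_ge (x / κ)
    rw [div_le_iff₀ hκ0] at hn
    exact mem_iUnion.2 ⟨n, hn⟩
  have hdir : Monotone (fun n : ℕ => Iic ((n : ℝ) * κ)) := by
    intro a b hab
    apply Iic_subset_Iic.2
    gcongr
  have hfinal : ∫⁻ y, ENNReal.ofReal (Real.exp (-η * hY y)) ∂ν ≤ ENNReal.ofReal K := by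
    rw [← setLIntegral_univ, ← hU, setLIntegral_iUnion_of_directed _ hdir.directed_le]
    apply iSup_le
    intro n
    change T (n * κ) ≤ _
    rw [← ENNReal.ofReal_toReal (hTfin (n * κ)).ne]
    exact ENNReal.ofReal_le_ofReal (hK n)
  exact hfinal.trans_lt ENNReal.ofReal_lt_top


noncomputable def ww (η R x : ℝ) : ℝ := Real.exp (-(2 * η) * |x - R|)

lemma ww_pos (η R x : ℝ) : 0 < ww η R x := Real.exp_pos _

lemma ww_cont (η R : ℝ) : Continuous (ww η R) := by unfold ww; fun_prop

lemma ww_shift {η : ℝ} (hη : 0 < η) (R x z : ℝ) : ww η R (x + z) ≤ Real.exp (2 * η * |z|) * ww η R x := by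
  unfold ww
  rw [← Real.exp_add]
  apply Real.exp_le_exp.2
  have : |x - R| ≤ |x + z - R| + |z| := by
    have := abs_add_le (x + z - R) (-z)
    rw [abs_neg] at this
    have e : x + z - R + -z = x - R := by ring
    rw [e] at this
    exact this
  nlinarith

lemma ww_growth {η : ℝ} (hη : 0 < η) (R x : ℝ) :
    ww η R x * Real.exp (η * |x|) ≤ Real.exp (η * |R|) * Real.exp (-η * |x - R|) := by
  unfold ww
  rw [← Real.exp_add, ← Real.exp_add]
  apply Real.exp_le_exp.2
  have : |x| ≤ |x - R| + |R| := by simpa using abs_add_le (x - R) R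
  nlinarith

lemma aux_int_one {η : ℝ} (hη : 0 < η) (R K : ℝ) (hK : 0 ≤ K) (f : ℝ → ℝ) (hf : AEStronglyMeasurable f)
    (hb : ∀ x, |f x| ≤ K * (ww η R x * Real.exp (η * |x|))) : Integrable f := by
  refine ((aux_integrable_exp_neg_abs_sub hη R).const_mul (K * Real.exp (η * |R|))).mono' hf
    (ae_of_all _ fun x => ?_)
  rw [Real.norm_eq_abs, mul_assoc]
  exact (hb x).trans (mul_le_mul_of_nonneg_left (ww_growth hη R x) hK)

lemma aux_int_prod {η : ℝ} (hη : 0 < η) (R K : ℝ) (hK : 0 ≤ K) (l : Measure ℝ) [IsFiniteMeasure l]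
    (hexp : Integrable (fun z : ℝ => Real.exp (η * |z|)) l) (f : ℝ → ℝ → ℝ)
    (hf : Continuous (Function.uncurry f))
    (hb : ∀ x z, |f x z| ≤ K * (ww η R x * Real.exp (η * |x|)) * Real.exp (η * |z|)) :
    Integrable (Function.uncurry f) (volume.prod l) := by
  have h1 := ((aux_integrable_exp_neg_abs_sub hη R).const_mul (K * Real.exp (η * |R|))).mul_prod hexp
  refine h1.mono' hf.aestronglyMeasurable (ae_of_all _ fun p => ?_)
  rw [Real.norm_eq_abs]
  refine (hb p.1 p.2).trans ?_
  have := mul_le_mul_of_nonneg_left (ww_growth hη R p.1) hK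
  have h2 := mul_le_mul_of_nonneg_right this (Real.exp_pos (η * |p.2|)).le
  simpa [mul_assoc] using h2

section energy

lemma aux_growth_sq {η A : ℝ} (D : ℝ → ℝ) (hA : 0 ≤ A)
    (hD : ∀ x, |D x| ≤ A * Real.exp (η / 2 * |x|)) (hη : 0 < η) (x z : ℝ) :
    |D (x - z)| ≤ A * Real.exp (η / 2 * |x|) * Real.exp (η / 2 * |z|) := by
  refine (hD _).trans ?_
  rw [mul_assoc, ← Real.exp_add]
  apply mul_le_mul_of_nonneg_left _ hA
  apply Real.exp_le_exp.2
  have : |x - z| ≤ |x| + |z| := abs_sub x z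
  nlinarith

lemma aux_exp_half (η x : ℝ) : Real.exp (η / 2 * |x|) * Real.exp (η / 2 * |x|) = Real.exp (η * |x|) := by
  rw [← Real.exp_add]; ring_nf

/-- product bounds -/
lemma aux_bd_prod {η A : ℝ} (D : ℝ → ℝ) (hA : 0 ≤ A)
    (hD : ∀ x, |D x| ≤ A * Real.exp (η / 2 * |x|)) (hη : 0 < η) (x z₁ z₂ z : ℝ)
    (h1 : |z₁| ≤ |z|) (h2 : |z₂| ≤ |z|) :
    |D (x - z₁) * D (x - z₂)| ≤ A ^ 2 * Real.exp (η * |x|) * Real.exp (η * |z|) := by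
  have a1 := aux_growth_sq D hA hD hη x z₁
  have a2 := aux_growth_sq D hA hD hη x z₂
  have e1 : Real.exp (η / 2 * |z₁|) ≤ Real.exp (η / 2 * |z|) := Real.exp_le_exp.2 (by nlinarith)
  have e2 : Real.exp (η / 2 * |z₂|) ≤ Real.exp (η / 2 * |z|) := Real.exp_le_exp.2 (by nlinarith)
  rw [abs_mul]
  calc |D (x - z₁)| * |D (x - z₂)| ≤ (A * Real.exp (η / 2 * |x|) * Real.exp (η / 2 * |z|)) *
        (A * Real.exp (η / 2 * |x|) * Real.exp (η / 2 * |z|)) := by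
        refine mul_le_mul (a1.trans ?_) (a2.trans ?_) (abs_nonneg _) (by positivity) <;> gcongr
    _ = _ := by rw [← aux_exp_half η x, ← aux_exp_half η z]; ring

variable {η A R : ℝ} {D : ℝ → ℝ}

noncomputable def NN (η R : ℝ) (D : ℝ → ℝ) (v : ℝ) : ℝ := ∫ x, ww η R x * (D x - D (x - v)) ^ 2

lemma NN_nonneg (η R : ℝ) (D : ℝ → ℝ) (v : ℝ) : 0 ≤ NN η R D v :=
  integral_nonneg fun x => mul_nonneg (ww_pos _ _ _).le (sq_nonneg _)

lemma aux_int_DD (hη : 0 < η) (hA : 0 ≤ A) (hc : Continuous D)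
    (hD : ∀ x, |D x| ≤ A * Real.exp (η / 2 * |x|)) (z₁ z₂ : ℝ) :
    Integrable fun x => ww η R x * (D (x - z₁) * D (x - z₂)) := by
  have hw := ww_cont η R
  refine aux_int_one hη R (A ^ 2 * Real.exp (η * max |z₁| |z₂|)) (by positivity) _
    (Continuous.aestronglyMeasurable (by fun_prop)) fun x => ?_
  have := aux_bd_prod D hA hD hη x z₁ z₂ (max |z₁| |z₂|)
    (by rw [abs_of_nonneg (le_max_of_le_left (abs_nonneg _))]; exact le_max_left _ _)
    (by rw [abs_of_nonneg (le_max_of_le_left (abs_nonneg _))]; exact le_max_right _ _)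
  rw [abs_of_nonneg (le_max_of_le_left (abs_nonneg _))] at this
  rw [abs_mul, abs_of_pos (ww_pos _ _ _)]
  refine (mul_le_mul_of_nonneg_left this (ww_pos η R x).le).trans (le_of_eq (by ring))

lemma aux_int_diff (hη : 0 < η) (hA : 0 ≤ A) (hc : Continuous D)
    (hD : ∀ x, |D x| ≤ A * Real.exp (η / 2 * |x|)) (z v : ℝ) :
    Integrable fun x => ww η R x * (D (x - z) - D (x - v)) ^ 2 := by
  have h1 := aux_int_DD (R := R) hη hA hc hD z z
  have h2 := aux_int_DD (R := R) hη hA hc hD z v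
  have h3 := aux_int_DD (R := R) hη hA hc hD v v
  refine ((h1.sub (h2.const_mul 2)).add h3).congr (ae_of_all _ fun x => ?_)
  simp only [Pi.add_apply, Pi.sub_apply]
  ring

lemma aux_shift (hη : 0 < η) (hA : 0 ≤ A) (hc : Continuous D)
    (hD : ∀ x, |D x| ≤ A * Real.exp (η / 2 * |x|)) (z v : ℝ) :
    ∫ x, ww η R x * (D (x - z) - D (x - z - v)) ^ 2 ≤ Real.exp (2 * η * |z|) * NN η R D v := by
  have h0 : ∫ x, ww η R x * (D (x - z) - D (x - z - v)) ^ 2 =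
      ∫ x, ww η R (x + z) * (D x - D (x - v)) ^ 2 := by
    rw [← integral_add_right_eq_self _ z]
    simp
  rw [h0, NN, ← integral_const_mul]
  have i1 := aux_int_diff (R := R) hη hA hc hD z (z + v)
  have i2 := i1.comp_add_right z
  have i3 := aux_int_diff (R := R) hη hA hc hD 0 v
  apply integral_mono
  · refine i2.congr (ae_of_all _ fun x => ?_)
    have e1 : x + z - z = x := by ring
    have e2 : x + z - (z + v) = x - v := by ring
    simp only [e1, e2]
  · simp only [sub_zero] at i3
    exact i3.const_mul _
  · intro x
    simp only
    rw [← mul_assoc]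
    exact mul_le_mul_of_nonneg_right (ww_shift hη R x z) (sq_nonneg _)

lemma NN_nsmul (hη : 0 < η) (hA : 0 ≤ A) (hc : Continuous D)
    (hD : ∀ x, |D x| ≤ A * Real.exp (η / 2 * |x|)) (n : ℕ) (v : ℝ) :
    NN η R D (n * v) ≤ (n : ℝ) ^ 2 * Real.exp (2 * η * (n * |v|)) * NN η R D v := by
  have hpt : ∀ x, ww η R x * (D x - D (x - n * v)) ^ 2 ≤
      (n : ℝ) * ∑ j ∈ Finset.range n, ww η R x * (D (x - j * v) - D (x - j * v - v)) ^ 2 := by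
    intro x
    have h1 : D x - D (x - n * v) = ∑ j ∈ Finset.range n, (D (x - j * v) - D (x - j * v - v)) := by
      have := Finset.sum_range_sub' (fun j : ℕ => D (x - j * v)) n
      simp only [Nat.cast_zero, zero_mul, sub_zero] at this
      rw [← this]
      apply Finset.sum_congr rfl
      intro j _
      congr 2
      push_cast; ring
    rw [h1, ← Finset.mul_sum]
    have h2 := sq_sum_le_card_mul_sum_sq (s := Finset.range n) (f := fun j : ℕ => (D (x - j * v) - D (x - j * v - v)))
    rw [Finset.card_range] at h2
    have := mul_le_mul_of_nonneg_left h2 (ww_pos η R x).le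
    linarith
  have ii : ∀ j : ℕ, Integrable fun x => ww η R x * (D (x - j * v) - D (x - j * v - v)) ^ 2 := by
    intro j
    have := aux_int_diff (R := R) hη hA hc hD (j * v) (j * v + v)
    simpa only [sub_sub] using this
  have i0 := aux_int_diff (R := R) hη hA hc hD 0 (n * v)
  simp only [sub_zero] at i0
  calc NN η R D (n * v) ≤ ∫ x, (n : ℝ) * ∑ j ∈ Finset.range n, ww η R x * (D (x - j * v) - D (x - j * v - v)) ^ 2 :=
        integral_mono i0 ((integrable_finsetSum _ fun j _ => ii j).const_mul _) hpt
    _ = (n : ℝ) * ∑ j ∈ Finset.range n, ∫ x, ww η R x * (D (x - j * v) - D (x - j * v - v)) ^ 2 := by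
        rw [integral_const_mul, integral_finsetSum _ fun j _ => ii j]
    _ ≤ (n : ℝ) * ∑ j ∈ Finset.range n, Real.exp (2 * η * (n * |v|)) * NN η R D v := by
        gcongr with j hj
        refine (aux_shift hη hA hc hD _ _).trans ?_
        apply mul_le_mul_of_nonneg_right _ (NN_nonneg _ _ _ _)
        apply Real.exp_le_exp.2
        rw [abs_mul, Nat.abs_cast]
        have : (j : ℝ) ≤ n := by exact_mod_cast (Finset.mem_range.1 hj).le
        gcongr
    _ = _ := by rw [Finset.sum_const, Finset.card_range, nsmul_eq_mul]; ring

lemma NN_int (hη : 0 < η) (hA : 0 ≤ A) (hc : Continuous D)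
    (hD : ∀ x, |D x| ≤ A * Real.exp (η / 2 * |x|)) (l : Measure ℝ) [IsFiniteMeasure l]
    (hexp : Integrable (fun z : ℝ => Real.exp (η * |z|)) l) : Integrable (NN η R D) l := by
  have hw := ww_cont η R
  have := aux_int_prod hη R (4 * A ^ 2) (by positivity) l hexp
    (fun x z => ww η R x * (D x - D (x - z)) ^ 2) (by unfold Function.uncurry; fun_prop) (by
      intro x z
      have b1 := aux_bd_prod D hA hD hη x 0 0 z (by simp) (by simp)
      have b2 := aux_bd_prod D hA hD hη x z z z le_rfl le_rfl
      rw [abs_mul, abs_of_pos (ww_pos _ _ _)]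
      rw [sub_zero, abs_mul_self] at b1
      rw [abs_mul_self] at b2
      have : |(D x - D (x - z)) ^ 2| ≤ 4 * A ^ 2 * Real.exp (η * |x|) * Real.exp (η * |z|) := by
        rw [abs_of_nonneg (sq_nonneg _)]
        nlinarith [sq_nonneg (D x + D (x - z))]
      refine (mul_le_mul_of_nonneg_left this (ww_pos η R x).le).trans (le_of_eq (by ring)))
  exact this.integral_prod_right

lemma NN_small (hη : 0 < η) (hη1 : η ≤ 1) (hA : 0 ≤ A) (hc : Continuous D)
    (hD : ∀ x, |D x| ≤ A * Real.exp (η / 2 * |x|)) (l : Measure ℝ) [IsFiniteMeasure l]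
    (hexp : Integrable (fun z : ℝ => Real.exp (η * |z|)) l)
    (c₀ r₀ a : ℝ) (hc0 : 0 < c₀) (hr0 : 0 < r₀)
    (hl : ENNReal.ofReal c₀ • volume.restrict (Icc (a - 2 * r₀) (a + 2 * r₀)) ≤ l)
    (v : ℝ) (hv : |v| ≤ r₀) :
    NN η R D v ≤ 2 * Real.exp (2 * (|a| + r₀)) / (r₀ * c₀) * ∫ z, NN η R D z ∂l := by
  set E := Real.exp (2 * (|a| + r₀)) with hE
  have hE0 : 0 < E := Real.exp_pos _
  have hN := NN_int (R := R) hη hA hc hD l hexp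
  have hN0 := NN_nonneg η R D
  have hNI : IntegrableOn (NN η R D) (Icc (a - 2 * r₀) (a + 2 * r₀)) := by
    have := hN.mono_measure hl
    rwa [integrable_smul_measure (by simpa using hc0) ENNReal.ofReal_ne_top] at this
  have hbig : ∫ z in Icc (a - 2 * r₀) (a + 2 * r₀), NN η R D z ≤ 1 / c₀ * ∫ z, NN η R D z ∂l := by
    have := integral_mono_measure hl (ae_of_all _ hN0) hN
    rw [integral_smul_measure, ENNReal.toReal_ofReal hc0.le, smul_eq_mul] at this
    rw [one_div, inv_mul_eq_div, le_div_iff₀ hc0]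
    linarith
  have hsub : ∀ u w : ℝ, a - 2 * r₀ ≤ u → u ≤ w → w ≤ a + 2 * r₀ →
      ∫ z in u..w, NN η R D z ≤ ∫ z in Icc (a - 2 * r₀) (a + 2 * r₀), NN η R D z := by
    intro u w h1 h2 h3
    rw [intervalIntegral.integral_of_le h2]
    apply setIntegral_mono_set hNI (ae_of_all _ hN0)
    apply LE.le.eventuallyLE
    intro t ht
    exact ⟨by linarith [ht.1], by linarith [ht.2]⟩
  have hii : ∀ u w : ℝ, a - 2 * r₀ ≤ u → u ≤ w → w ≤ a + 2 * r₀ → IntervalIntegrable (NN η R D) volume u w := by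
    intro u w h1 h2 h3
    rw [intervalIntegrable_iff_integrableOn_Ioc_of_le h2]
    apply hNI.mono_set
    intro t ht
    exact ⟨by linarith [ht.1], by linarith [ht.2]⟩
  have hv' := abs_le.1 hv
  have hpt : ∀ z ∈ Icc (a - r₀) (a + r₀), NN η R D v ≤ 2 * E * (NN η R D z + NN η R D (z + v)) := by
    intro z hz
    have hzb : |z| ≤ |a| + r₀ := by
      have h1 : |z - a| ≤ r₀ := by rw [abs_le]; constructor <;> linarith [hz.1, hz.2]
      have h2 := abs_add_le (z - a) a
      rw [sub_add_cancel] at h2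
      linarith
    -- N(v) in terms of shifted by -z
    let D' : ℝ → ℝ := fun x => D x
    have i1 := aux_int_diff (R := R) hη hA hc hD 0 z
    have i2 := aux_int_diff (R := R) hη hA hc hD 0 (z + v)
    have i3 := aux_int_diff (R := R) hη hA hc hD 0 v
    have i4 := aux_int_diff (R := R) hη hA hc hD z (z + v)
    simp only [sub_zero] at i1 i2 i3
    have h1 : NN η R D v ≤ Real.exp (2 * η * |z|) * ∫ x, ww η R x * (D (x - z) - D (x - (z + v))) ^ 2 := by
      rw [NN, ← integral_add_right_eq_self (fun x => ww η R x * (D (x - z) - D (x - (z + v))) ^ 2) z,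
        ← integral_const_mul]
      apply integral_mono i3 ((i4.comp_add_right z).const_mul _)
      intro x
      have e1 : x + z - z = x := by ring
      have e2 : x + z - (z + v) = x - v := by ring
      simp only [e1, e2]
      rw [← mul_assoc]
      apply mul_le_mul_of_nonneg_right _ (sq_nonneg _)
      have := ww_shift hη R (x + z) (-z)
      simpa using this
    have h2 : ∫ x, ww η R x * (D (x - z) - D (x - (z + v))) ^ 2 ≤ 2 * (NN η R D z + NN η R D (z + v)) := by
      rw [NN, NN, ← integral_add i1 i2, ← integral_const_mul]
      apply integral_mono i4 ((i1.add i2).const_mul _)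
      intro x
      simp only [Pi.add_apply]
      rw [← mul_add]
      have : (D (x - z) - D (x - (z + v))) ^ 2 ≤ 2 * ((D x - D (x - z)) ^ 2 + (D x - D (x - (z + v))) ^ 2) := by
        nlinarith [sq_nonneg ((D x - D (x - z)) + (D x - D (x - (z + v))))]
      nlinarith [mul_le_mul_of_nonneg_left this (ww_pos η R x).le]
    have h3 : Real.exp (2 * η * |z|) ≤ E := by
      apply Real.exp_le_exp.2
      nlinarith [abs_nonneg z]
    calc NN η R D v ≤ Real.exp (2 * η * |z|) * (2 * (NN η R D z + NN η R D (z + v))) := by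
          refine h1.trans ?_; gcongr
      _ ≤ E * (2 * (NN η R D z + NN η R D (z + v))) := by
          have := hN0 z; have := hN0 (z + v); gcongr
      _ = _ := by ring
  have j1 := hii (a - r₀) (a + r₀) (by linarith) (by linarith) (by linarith)
  have j2 : IntervalIntegrable (fun z => NN η R D (z + v)) volume (a - r₀) (a + r₀) := by
    have := (hii (a - r₀ + v) (a + r₀ + v) (by linarith) (by linarith) (by linarith)).comp_add_right v
    simpa using this
  have hint : ∫ z in (a - r₀)..(a + r₀), NN η R D v ≤ ∫ z in (a - r₀)..(a + r₀), 2 * E * (NN η R D z + NN η R D (z + v)) := by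
    apply intervalIntegral.integral_mono_on (by linarith) (by simp) ((j1.add j2).const_mul _)
    exact hpt
  rw [intervalIntegral.integral_const, intervalIntegral.integral_const_mul, intervalIntegral.integral_add j1 j2,
    intervalIntegral.integral_comp_add_right, smul_eq_mul] at hint
  have k1 := (hsub (a - r₀) (a + r₀) (by linarith) (by linarith) (by linarith)).trans hbig
  have k2 := (hsub (a - r₀ + v) (a + r₀ + v) (by linarith) (by linarith) (by linarith)).trans hbig
  have k3 : 2 * r₀ * NN η R D v ≤ 2 * E * (2 * (1 / c₀ * ∫ z, NN η R D z ∂l)) := by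
    refine le_trans (le_of_eq (by ring)) (hint.trans ?_)
    gcongr
    linarith
  have e : 2 * E / (r₀ * c₀) * ∫ z, NN η R D z ∂l = (2 * E * (2 * (1 / c₀ * ∫ z, NN η R D z ∂l))) / (2 * r₀) := by
    field_simp
  rw [e, le_div_iff₀ (by positivity)]
  linarith

end energy


lemma aux_exp_int_le {c d : ℝ} (hcd : c ≤ d) (l : Measure ℝ)
    (hexp : Integrable (fun z : ℝ => Real.exp (d * |z|)) l) :
    Integrable (fun z : ℝ => Real.exp (c * |z|)) l := by
  refine hexp.mono' (Continuous.aestronglyMeasurable (by fun_prop)) (ae_of_all _ fun z => ?_)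
  rw [Real.norm_eq_abs, abs_of_pos (Real.exp_pos _)]
  exact Real.exp_le_exp.2 (mul_le_mul_of_nonneg_right hcd (abs_nonneg _))

noncomputable def cv (l : Measure ℝ) (D : ℝ → ℝ) (x : ℝ) : ℝ := ∫ z, D (x - z) ∂l

section core
variable {η A R : ℝ} {D : ℝ → ℝ}

lemma cv_meas (hc : Continuous D) (l : Measure ℝ) [SFinite l] : StronglyMeasurable (cv l D) := by
  have : StronglyMeasurable (Function.uncurry fun x z => D (x - z)) := by
    apply Continuous.stronglyMeasurable; unfold Function.uncurry; fun_prop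
  exact this.integral_prod_right

lemma cv_int (hη : 0 < η) (hA : 0 ≤ A) (hc : Continuous D)
    (hD : ∀ x, |D x| ≤ A * Real.exp (η / 2 * |x|)) (l : Measure ℝ) 
    (hexp : Integrable (fun z : ℝ => Real.exp (η / 2 * |z|)) l) (x : ℝ) :
    Integrable (fun z => D (x - z)) l := by
  refine (hexp.const_mul (A * Real.exp (η / 2 * |x|))).mono'
    (Continuous.aestronglyMeasurable (by fun_prop)) (ae_of_all _ fun z => ?_)
  exact aux_growth_sq D hA hD hη x z

lemma cv_bd (hη : 0 < η) (hA : 0 ≤ A) 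
    (hD : ∀ x, |D x| ≤ A * Real.exp (η / 2 * |x|)) (l : Measure ℝ) 
    (hexp : Integrable (fun z : ℝ => Real.exp (η / 2 * |z|)) l) (x : ℝ) :
    |cv l D x| ≤ (A * ∫ z, Real.exp (η / 2 * |z|) ∂l) * Real.exp (η / 2 * |x|) := by
  have := norm_integral_le_of_norm_le (hexp.const_mul (A * Real.exp (η / 2 * |x|))) (f := fun z => D (x - z))
    (ae_of_all _ fun z => aux_growth_sq D hA hD hη x z)
  rw [integral_const_mul] at this
  exact this.trans (le_of_eq (by ring))

lemma NN_gen (hη : 0 < η) (hη1 : η ≤ 1) (hA : 0 ≤ A) (hc : Continuous D)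
    (hD : ∀ x, |D x| ≤ A * Real.exp (η / 2 * |x|)) (l : Measure ℝ) [IsFiniteMeasure l]
    (hexp : Integrable (fun z : ℝ => Real.exp (η * |z|)) l)
    (c₀ r₀ a : ℝ) (hc0 : 0 < c₀) (hr0 : 0 < r₀)
    (hl : ENNReal.ofReal c₀ • volume.restrict (Icc (a - 2 * r₀) (a + 2 * r₀)) ≤ l)
    (d : ℝ) (hd : 0 < d) (hηd : η ≤ d / 4) (v : ℝ) :
    NN η R D v ≤ (2 * Real.exp (2 * (|a| + r₀)) / (r₀ * c₀) * (2 + 4 / (d * r₀)) ^ 2 * ∫ z, NN η R D z ∂l) *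
      Real.exp (d * |v|) := by
  set n : ℕ := ⌈|v| / r₀⌉₊ + 1 with hn
  have hnpos : (0 : ℝ) < n := by positivity
  have hn1 : |v| / r₀ ≤ n := by
    rw [hn]; push_cast; linarith [Nat.le_ceil (|v| / r₀)]
  have hn2 : (n : ℝ) ≤ |v| / r₀ + 2 := by
    rw [hn]; push_cast; linarith [(Nat.ceil_lt_add_one (by positivity : 0 ≤ |v| / r₀)).le]
  have hw : |v / n| ≤ r₀ := by
    rw [abs_div, Nat.abs_cast, div_le_iff₀ hnpos]
    rw [div_le_iff₀ hr0] at hn1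
    linarith
  have h1 := NN_small (R := R) hη hη1 hA hc hD l hexp c₀ r₀ a hc0 hr0 hl (v / n) hw
  have h2 := NN_nsmul (R := R) hη hA hc hD n (v / n)
  have e1 : (n : ℝ) * (v / n) = v := by field_simp
  have e2 : (n : ℝ) * |v / n| = |v| := by rw [abs_div, Nat.abs_cast]; field_simp
  rw [e1, e2] at h2
  have hQ : 0 ≤ ∫ z, NN η R D z ∂l := integral_nonneg fun z => NN_nonneg _ _ _ _
  have h3 : (n : ℝ) ≤ (2 + 4 / (d * r₀)) * Real.exp (d / 4 * |v|) := by
    have h4 := Real.add_one_le_exp (d / 4 * |v|)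
    calc (n : ℝ) ≤ |v| / r₀ + 2 := hn2
      _ ≤ (2 + 4 / (d * r₀)) * (d / 4 * |v| + 1) := by
        have : (2 + 4 / (d * r₀)) * (d / 4 * |v| + 1) = |v| / r₀ + 2 + (d / 2 * |v| + 4 / (d * r₀)) := by
          field_simp; ring
        rw [this]
        have : 0 ≤ d / 2 * |v| + 4 / (d * r₀) := by positivity
        linarith
      _ ≤ _ := by gcongr
  calc NN η R D v ≤ (n : ℝ) ^ 2 * Real.exp (2 * η * |v|) * NN η R D (v / n) := h2
    _ ≤ ((2 + 4 / (d * r₀)) * Real.exp (d / 4 * |v|)) ^ 2 * Real.exp (d / 2 * |v|) *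
        (2 * Real.exp (2 * (|a| + r₀)) / (r₀ * c₀) * ∫ z, NN η R D z ∂l) := by
        have : Real.exp (2 * η * |v|) ≤ Real.exp (d / 2 * |v|) := by
          apply Real.exp_le_exp.2
          exact mul_le_mul_of_nonneg_right (by linarith) (abs_nonneg _)
        have := NN_nonneg η R D (v / n)
        gcongr
    _ = _ := by
        have : Real.exp (d * |v|) = Real.exp (d / 4 * |v|) ^ 2 * Real.exp (d / 2 * |v|) := by
          rw [← Real.exp_nat_mul, ← Real.exp_add]; congr 1; push_cast; ring
        rw [this]; ring

lemma aux_fub (hη : 0 < η) (hA : 0 ≤ A) (hc : Continuous D)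
    (hD : ∀ x, |D x| ≤ A * Real.exp (η / 2 * |x|)) (l : Measure ℝ) [IsFiniteMeasure l]
    (hexp : Integrable (fun z : ℝ => Real.exp (η * |z|)) l) :
    Integrable (fun z => ∫ x, ww η R x * (D x * D (x - z))) l ∧
    ∫ z, (∫ x, ww η R x * (D x * D (x - z))) ∂l = ∫ x, ww η R x * (D x * cv l D x) := by
  have hw := ww_cont η R
  have := aux_int_prod hη R (A ^ 2) (by positivity) l hexp
    (fun x z => ww η R x * (D x * D (x - z))) (by unfold Function.uncurry; fun_prop) (by
      intro x z
      have b1 := aux_bd_prod D hA hD hη x 0 z z (by simp) le_rfl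
      rw [abs_mul, abs_of_pos (ww_pos _ _ _)]
      rw [sub_zero] at b1
      refine (mul_le_mul_of_nonneg_left b1 (ww_pos η R x).le).trans (le_of_eq (by ring)))
  refine ⟨this.integral_prod_right, ?_⟩
  rw [← integral_integral_swap this]
  congr 1; ext x
  rw [integral_const_mul, integral_const_mul]; rfl

/-- expansion -/
lemma aux_expand (hη : 0 < η) (hA : 0 ≤ A) (hc : Continuous D)
    (hD : ∀ x, |D x| ≤ A * Real.exp (η / 2 * |x|)) (z : ℝ) :
    ∫ x, ww η R x * (D x) ^ 2 ≤ NN η R D z + 2 * ∫ x, ww η R x * (D x * D (x - z)) ∧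
    NN η R D z + 2 * (∫ x, ww η R x * (D x * D (x - z))) ≤
      (1 + Real.exp (2 * η * |z|)) * ∫ x, ww η R x * (D x) ^ 2 := by
  have i1 := aux_int_DD (R := R) hη hA hc hD 0 0
  have i2 := aux_int_DD (R := R) hη hA hc hD 0 z
  have i3 := aux_int_DD (R := R) hη hA hc hD z z
  simp only [sub_zero, ← sq] at i1 i2 i3
  have e : NN η R D z + 2 * ∫ x, ww η R x * (D x * D (x - z)) =
      (∫ x, ww η R x * (D x) ^ 2) + ∫ x, ww η R x * (D (x - z)) ^ 2 := by
    have e1 : NN η R D z = (∫ x, ww η R x * (D x) ^ 2) + (∫ x, ww η R x * (D (x - z)) ^ 2) -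
        2 * ∫ x, ww η R x * (D x * D (x - z)) := by
      have h3 := integral_sub (i1.add i3) (i2.const_mul 2)
      simp only [Pi.add_apply] at h3
      rw [NN, ← integral_const_mul, ← integral_add i1 i3, ← h3]
      congr 1; ext x; ring
    rw [e1]; ring
  rw [e]
  have h0 : 0 ≤ ∫ x, ww η R x * (D (x - z)) ^ 2 :=
    integral_nonneg fun x => mul_nonneg (ww_pos _ _ _).le (sq_nonneg _)
  have h1 : ∫ x, ww η R x * (D (x - z)) ^ 2 ≤ Real.exp (2 * η * |z|) * ∫ x, ww η R x * (D x) ^ 2 := by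
    rw [← integral_add_right_eq_self _ z, ← integral_const_mul]
    apply integral_mono (i3.comp_add_right z) (i1.const_mul _)
    intro x
    simp only [add_sub_cancel_right]
    rw [← mul_assoc]
    exact mul_le_mul_of_nonneg_right (ww_shift hη R x z) (sq_nonneg _)
  constructor
  · linarith
  · linarith

lemma aux_amgm (hη : 0 < η) (hA : 0 ≤ A) (hc : Continuous D)
    (hD : ∀ x, |D x| ≤ A * Real.exp (η / 2 * |x|)) (p : ℝ → ℝ) (B : ℝ) (hB : 0 ≤ B)
    (hpm : StronglyMeasurable p) (hp : ∀ x, |p x| ≤ B * Real.exp (η / 2 * |x|)) (α : ℝ) (hα : 0 < α) :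
    |2 * ∫ x, ww η R x * (D x * p x)| ≤ α * (∫ x, ww η R x * (D x) ^ 2) + (∫ x, ww η R x * (p x) ^ 2) / α := by
  have i1 := aux_int_DD (R := R) hη hA hc hD 0 0
  simp only [sub_zero, ← sq] at i1
  have i2 : Integrable fun x => ww η R x * (p x) ^ 2 := by
    refine aux_int_one hη R (B ^ 2) (by positivity) _
      ((ww_cont η R).stronglyMeasurable.mul (hpm.pow 2)).aestronglyMeasurable fun x => ?_
    rw [abs_mul, abs_of_pos (ww_pos _ _ _), abs_pow, ← aux_exp_half]
    have := pow_le_pow_left₀ (abs_nonneg _) (hp x) 2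
    refine (mul_le_mul_of_nonneg_left this (ww_pos η R x).le).trans (le_of_eq (by ring))
  rw [← integral_const_mul, ← integral_const_mul, ← integral_div, ← integral_add (i1.const_mul _) (i2.div_const _)]
  rw [← Real.norm_eq_abs]
  apply norm_integral_le_of_norm_le ((i1.const_mul _).add (i2.div_const _)) (ae_of_all _ fun x => ?_)
  rw [Real.norm_eq_abs, abs_mul, abs_mul, abs_of_pos (ww_pos _ _ _), abs_mul, abs_two]
  simp only [Pi.add_apply]
  have : 2 * (|D x| * |p x|) ≤ α * (D x) ^ 2 + (p x) ^ 2 / α := by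
    rw [← sq_abs (D x), ← sq_abs (p x)]
    have e : α * |D x| ^ 2 + |p x| ^ 2 / α - 2 * (|D x| * |p x|) = (α * |D x| - |p x|) ^ 2 / α := by
      field_simp; ring
    have : 0 ≤ (α * |D x| - |p x|) ^ 2 / α := by positivity
    linarith
  have := mul_le_mul_of_nonneg_left this (ww_pos η R x).le
  calc _ = ww η R x * (2 * (|D x| * |p x|)) := by ring
    _ ≤ _ := this
    _ = _ := by ring

end core

set_option maxHeartbeats 1000000 in
lemma aux_core (l κ : Measure ℝ) [IsProbabilityMeasure l] [IsFiniteMeasure κ] (d : ℝ) (hd : 0 < d)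
    (hl : Integrable (fun z : ℝ => Real.exp (d * |z|)) l)
    (hκ : Integrable (fun z : ℝ => Real.exp (d * |z|)) κ)
    (hk0 : 0 < κ.real univ)
    (c₀ r₀ a : ℝ) (hc0 : 0 < c₀) (hr0 : 0 < r₀)
    (hlow : ENNReal.ofReal c₀ • volume.restrict (Icc (a - 2 * r₀) (a + 2 * r₀)) ≤ l) :
    ∃ η0 > 0, ∀ η, 0 < η → η ≤ η0 → ∃ C > 0, ∀ (A : ℝ) (D : ℝ → ℝ) (R : ℝ), 0 ≤ A → Continuous D →
      (∀ x, |D x| ≤ A * Real.exp (η / 2 * |x|)) →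
      ∫ x, ww η R x * (D x) ^ 2 ≤ C * ((∫ x, ww η R x * (cv κ D x) ^ 2) +
        ∫ x, ww η R x * (cv l D x - D x) ^ 2) := by
  set k0 := κ.real univ with hk0d
  set El := ∫ z, Real.exp (d * |z|) ∂l with hEl
  set Ek := ∫ z, Real.exp (d * |z|) ∂κ with hEk
  have hEl0 : 0 ≤ El := integral_nonneg fun z => (Real.exp_pos _).le
  have hEk0 : 0 ≤ Ek := integral_nonneg fun z => (Real.exp_pos _).le
  set C1 := 2 * Real.exp (2 * (|a| + r₀)) / (r₀ * c₀) * (2 + 4 / (d * r₀)) ^ 2 with hC1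
  have hC10 : 0 ≤ C1 := by positivity
  set C2 := C1 * Ek + 1 with hC2
  have hC20 : 0 < C2 := by positivity
  refine ⟨min (min 1 (d / 4)) (k0 * d / (8 * C2 * (El + 1))), by positivity, fun η hη hηle => ?_⟩
  have hη1 : η ≤ 1 := hηle.trans ((min_le_left _ _).trans (min_le_left _ _))
  have hηd : η ≤ d / 4 := hηle.trans ((min_le_left _ _).trans (min_le_right _ _))
  have hηk : η ≤ k0 * d / (8 * C2 * (El + 1)) := hηle.trans (min_le_right _ _)
  refine ⟨16 / k0 ^ 2 * (1 + C2 ^ 2), by positivity, fun A D R hA hc hD => ?_⟩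
  have hl1 := aux_exp_int_le (by linarith : η ≤ d) l hl
  have hl2 := aux_exp_int_le (by linarith : η / 2 ≤ d) l hl
  have hl3 := aux_exp_int_le (by linarith : 2 * η ≤ d) l hl
  have hκ1 := aux_exp_int_le (by linarith : η ≤ d) κ hκ
  have hκ2 := aux_exp_int_le (by linarith : η / 2 ≤ d) κ hκ
  set S := ∫ x, ww η R x * (D x) ^ 2 with hS
  have hS0 : 0 ≤ S := integral_nonneg fun x => mul_nonneg (ww_pos _ _ _).le (sq_nonneg _)
  set P := ∫ x, ww η R x * (cv κ D x) ^ 2 with hP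
  set W := ∫ x, ww η R x * (cv l D x - D x) ^ 2 with hW
  have hP0 : 0 ≤ P := integral_nonneg fun x => mul_nonneg (ww_pos _ _ _).le (sq_nonneg _)
  have hW0 : 0 ≤ W := integral_nonneg fun x => mul_nonneg (ww_pos _ _ _).le (sq_nonneg _)
  set Q := ∫ z, NN η R D z ∂l with hQ
  have hQ0 : 0 ≤ Q := integral_nonneg fun z => NN_nonneg _ _ _ _
  obtain ⟨fl1, fl2⟩ := aux_fub (R := R) hη hA hc hD l hl1
  obtain ⟨fk1, fk2⟩ := aux_fub (R := R) hη hA hc hD κ hκ1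
  have nl := NN_int (R := R) hη hA hc hD l hl1
  have nk := NN_int (R := R) hη hA hc hD κ hκ1
  -- (A)
  have hAA : k0 * S ≤ (∫ v, NN η R D v ∂κ) + 2 * ∫ x, ww η R x * (D x * cv κ D x) := by
    have := integral_mono (integrable_const S) (nk.add (fk1.const_mul 2))
      (fun v => (aux_expand (R := R) hη hA hc hD v).1)
    simp only [Pi.add_apply] at this
    rw [integral_const, integral_add nk (fk1.const_mul 2), integral_const_mul, fk2, smul_eq_mul] at this
    exact this
  -- (B)
  have hBB : ∫ v, NN η R D v ∂κ ≤ C2 * Q := by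
    have := integral_mono nk (hκ.const_mul (C1 * Q))
      (fun v => NN_gen (R := R) hη hη1 hA hc hD l hl1 c₀ r₀ a hc0 hr0 hlow d hd hηd v)
    rw [integral_const_mul] at this
    rw [hC2]
    nlinarith
  -- (C)
  have hCC : Q + 2 * (∫ x, ww η R x * (D x * cv l D x)) ≤ (2 + (2 * η / d) * El) * S := by
    have := integral_mono (nl.add (fl1.const_mul 2)) (((integrable_const 1).add hl3).mul_const S)
      (fun v => (aux_expand (R := R) hη hA hc hD v).2)
    simp only [Pi.add_apply] at this
    rw [integral_add nl (fl1.const_mul 2), integral_const_mul, fl2] at this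
    refine this.trans ?_
    rw [integral_mul_const]
    apply mul_le_mul_of_nonneg_right _ hS0
    rw [integral_add (integrable_const 1) hl3]
    have h5 : ∫ z, Real.exp (2 * η * |z|) ∂l ≤ ∫ z, (1 + (2 * η / d) * Real.exp (d * |z|)) ∂l := by
      apply integral_mono hl3 ((integrable_const 1).add (hl.const_mul _))
      intro z
      have ht1 : 2 * η / d ≤ 1 := by rw [div_le_one hd]; linarith
      have ht0 : 0 ≤ 2 * η / d := by positivity
      have := convexOn_exp.2 (mem_univ (0 : ℝ)) (mem_univ (d * |z|)) (sub_nonneg.2 ht1) ht0 (by ring)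
      simp only [smul_eq_mul, mul_zero, zero_add, Real.exp_zero, mul_one] at this
      have e : 2 * η / d * (d * |z|) = 2 * η * |z| := by field_simp
      rw [e] at this
      simp only [Pi.add_apply]
      linarith
    rw [integral_add (integrable_const 1) (hl.const_mul _), integral_const_mul] at h5
    simp only [integral_const, probReal_univ, smul_eq_mul, mul_one] at h5 ⊢
    linarith
  -- D s
  have i1 := aux_int_DD (R := R) hη hA hc hD 0 0
  simp only [sub_zero, ← sq] at i1
  have hDs : ∫ x, ww η R x * (D x * (cv l D x - D x)) = (∫ x, ww η R x * (D x * cv l D x)) - S := by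
    have iC : Integrable fun x => ww η R x * (D x * cv l D x) := by
      have hm := (ww_cont η R).stronglyMeasurable.mul (hc.stronglyMeasurable.mul (cv_meas hc l))
      refine aux_int_one hη R (A * (A * ∫ z, Real.exp (η / 2 * |z|) ∂l))
        (by have : 0 ≤ ∫ z, Real.exp (η / 2 * |z|) ∂l := integral_nonneg fun z => (Real.exp_pos _).le
            positivity) _ hm.aestronglyMeasurable fun x => ?_
      rw [abs_mul, abs_of_pos (ww_pos _ _ _), abs_mul, ← aux_exp_half]
      have := mul_le_mul (hD x) (cv_bd hη hA hD l hl2 x) (abs_nonneg _) (by positivity)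
      refine (mul_le_mul_of_nonneg_left this (ww_pos η R x).le).trans (le_of_eq (by ring))
    rw [hS, ← integral_sub iC i1]
    congr 1; ext x; ring
  have hml0 : 0 ≤ ∫ z, Real.exp (η / 2 * |z|) ∂l := integral_nonneg fun z => (Real.exp_pos _).le
  have hmk0 : 0 ≤ ∫ z, Real.exp (η / 2 * |z|) ∂κ := integral_nonneg fun z => (Real.exp_pos _).le
  have am1 := aux_amgm (R := R) hη hA hc hD (cv κ D) _ (by positivity) (cv_meas hc κ)
    (cv_bd hη hA hD κ hκ2) (k0 / 4) (by positivity)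
  have am2 := aux_amgm (R := R) hη hA hc hD (fun x => cv l D x - D x)
    (A * (∫ z, Real.exp (η / 2 * |z|) ∂l) + A) (by positivity) ((cv_meas hc l).sub hc.stronglyMeasurable)
    (fun x => by
      have h1 := cv_bd hη hA hD l hl2 x
      have h2 := hD x
      have h3 := abs_sub (cv l D x) (D x)
      rw [add_mul]
      linarith) (k0 / (4 * C2)) (by positivity)
  rw [← hS, ← hP] at am1
  rw [← hS, ← hW, hDs] at am2
  have am1' := (abs_le.1 am1).2
  have am2' := (abs_le.1 am2).1
  have hε : C2 * ((2 * η / d) * El) ≤ k0 / 4 := by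
    rw [le_div_iff₀ (by positivity)] at hηk
    have e : C2 * ((2 * η / d) * El) = (2 * η * C2 * El) / d := by ring
    rw [e, div_le_iff₀ hd]
    nlinarith [mul_pos hη hC20]
  have hQb : Q ≤ (2 * η / d) * El * S + (k0 / (4 * C2) * S + W / (k0 / (4 * C2))) := by linarith
  have hQC : C2 * Q ≤ k0 / 4 * S + k0 / 4 * S + 4 * C2 ^ 2 / k0 * W := by
    have h := mul_le_mul_of_nonneg_left hQb hC20.le
    have e : C2 * ((2 * η / d) * El * S + (k0 / (4 * C2) * S + W / (k0 / (4 * C2)))) =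
       C2 * ((2 * η / d) * El) * S + k0 / 4 * S + 4 * C2 ^ 2 / k0 * W := by
      field_simp; ring
    rw [e] at h
    have := mul_le_mul_of_nonneg_right hε hS0
    linarith
  have hfin : k0 / 4 * S ≤ 4 / k0 * P + 4 * C2 ^ 2 / k0 * W := by
    have e : P / (k0 / 4) = 4 / k0 * P := by field_simp
    rw [e] at am1'
    linarith
  have hfin2 : S ≤ 16 / k0 ^ 2 * P + 16 / k0 ^ 2 * C2 ^ 2 * W := by
    have h := mul_le_mul_of_nonneg_left hfin (by positivity : 0 ≤ 4 / k0)
    have e1 : 4 / k0 * (k0 / 4 * S) = S := by field_simp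
    have e2 : 4 / k0 * (4 / k0 * P + 4 * C2 ^ 2 / k0 * W) = 16 / k0 ^ 2 * P + 16 / k0 ^ 2 * C2 ^ 2 * W := by
      ring
    rw [e1, e2] at h
    exact h
  have e3 : 16 / k0 ^ 2 * (1 + C2 ^ 2) * (P + W) = 16 / k0 ^ 2 * P + 16 / k0 ^ 2 * C2 ^ 2 * W +
    (16 / k0 ^ 2 * W + 16 / k0 ^ 2 * C2 ^ 2 * P) := by ring
  rw [e3]
  have : 0 ≤ 16 / k0 ^ 2 * W + 16 / k0 ^ 2 * C2 ^ 2 * P := by positivity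
  linarith


lemma aux_limit (φ φ' : ℝ → ℝ) (h : ∀ x, HasDerivAt φ (φ' x) x) (C ρ : ℝ) (hρ : 0 < ρ)
    (hb : ∀ x, 0 ≤ x → |φ' x| ≤ C * Real.exp (-ρ * x)) :
    ∃ L, ∀ x, 0 ≤ x → |φ x - L| ≤ C / ρ * Real.exp (-ρ * x) := by
  have hE : ∀ x : ℝ, HasDerivAt (fun x => C / ρ * Real.exp (-ρ * x)) (-(C * Real.exp (-ρ * x))) x := by
    intro x
    have h1 : HasDerivAt (fun x : ℝ => -ρ * x) (-ρ) x := by simpa using (hasDerivAt_id x).const_mul (-ρ)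
    have := (h1.exp).const_mul (C / ρ)
    have e : C / ρ * (Real.exp (-ρ * x) * -ρ) = -(C * Real.exp (-ρ * x)) := by
      field_simp
    rw [e] at this
    exact this
  set u : ℝ → ℝ := fun x => φ x - C / ρ * Real.exp (-ρ * x) with hu
  set v : ℝ → ℝ := fun x => φ x + C / ρ * Real.exp (-ρ * x) with hv
  have du : ∀ x, HasDerivAt u (φ' x - -(C * Real.exp (-ρ * x))) x := fun x => (h x).sub (hE x)
  have dv : ∀ x, HasDerivAt v (φ' x + -(C * Real.exp (-ρ * x))) x := fun x => (h x).add (hE x)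
  have hum : MonotoneOn u (Ici 0) := by
    apply monotoneOn_of_deriv_nonneg (convex_Ici 0)
    · exact fun x _ => (du x).continuousAt.continuousWithinAt
    · exact fun x _ => (du x).differentiableAt.differentiableWithinAt
    · intro x hx
      rw [interior_Ici] at hx
      rw [(du x).deriv]
      linarith [(abs_le.1 (hb x (le_of_lt hx))).1]
  have hva : AntitoneOn v (Ici 0) := by
    apply antitoneOn_of_deriv_nonpos (convex_Ici 0)
    · exact fun x _ => (dv x).continuousAt.continuousWithinAt
    · exact fun x _ => (dv x).differentiableAt.differentiableWithinAt
    · intro x hx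
      rw [interior_Ici] at hx
      rw [(dv x).deriv]
      linarith [(abs_le.1 (hb x (le_of_lt hx))).2]
  have hC : 0 ≤ C := by
    have := (abs_nonneg _).trans (hb 0 le_rfl)
    simpa using this
  have huv : ∀ x, u x ≤ v x := by
    intro x
    have : 0 ≤ C / ρ * Real.exp (-ρ * x) := by positivity
    simp only [hu, hv]; linarith
  have hall : ∀ x, 0 ≤ x → ∀ y, 0 ≤ y → u x ≤ v y := by
    intro x hx y hy
    rcases le_total x y with hxy | hxy
    · exact (hum hx hy hxy).trans (huv y)
    · exact (huv x).trans (hva hy hx hxy)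
  refine ⟨sSup (u '' Ici 0), fun x hx => ?_⟩
  have h1 : u x ≤ sSup (u '' Ici 0) := by
    apply le_csSup
    · refine ⟨v 0, ?_⟩
      rintro _ ⟨y, hy, rfl⟩
      exact hall y hy 0 le_rfl
    · exact ⟨x, hx, rfl⟩
  have h2 : sSup (u '' Ici 0) ≤ v x := by
    refine csSup_le ⟨u 0, ⟨0, self_mem_Ici, rfl⟩⟩ ?_
    rintro _ ⟨y, hy, rfl⟩
    exact hall y hy x hx
  simp only [hu, hv] at h1 h2
  rw [abs_le]; constructor <;> linarith

lemma aux_growth {b B : ℝ} (G : ℝ → ℝ) (hB : 0 ≤ B)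
    (hG : ∀ x, |G x| ≤ B * Real.exp (b * |x|)) (hb : 0 < b) (x z : ℝ) :
    |G (x - z)| ≤ B * Real.exp (b * |x|) * Real.exp (b * |z|) := by
  have := aux_growth_sq (η := 2 * b) G hB (by simpa using hG) (by positivity) x z
  simpa using this

lemma cv_int' {b B : ℝ} (G : ℝ → ℝ) (hc : Continuous G) (hB : 0 ≤ B)
    (hG : ∀ x, |G x| ≤ B * Real.exp (b * |x|)) (hb : 0 < b) (l : Measure ℝ)
    (hl : Integrable (fun z : ℝ => Real.exp (b * |z|)) l) (x : ℝ) : Integrable (fun z => G (x - z)) l :=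
  cv_int (η := 2 * b) (by positivity) hB hc (by simpa using hG) l (by simpa using hl) x

lemma aux_cv_deriv {b B : ℝ} (G H : ℝ → ℝ) (hc : Continuous G) (hB : 0 ≤ B) (hb : 0 < b)
    (hG : ∀ x, |G x| ≤ B * Real.exp (b * |x|)) 
    (hH : ∀ x, HasDerivAt H (G x) x) (l : Measure ℝ) 
    (hl : Integrable (fun z : ℝ => Real.exp (b * |z|)) l) (hHi : ∀ x, Integrable (fun z => H (x - z)) l) (x : ℝ) :
    HasDerivAt (cv l H) (cv l G x) x := by
  have hHc : Continuous H := continuous_iff_continuousAt.2 fun x => (hH x).continuousAt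
  have := hasDerivAt_integral_of_dominated_loc_of_deriv_le (μ := l) (F := fun x z => H (x - z))
    (F' := fun x z => G (x - z)) (x₀ := x) (s := Metric.ball x 1)
    (bound := fun z => B * Real.exp (b * (|x| + 1)) * Real.exp (b * |z|))
    (Metric.ball_mem_nhds x one_pos)
    (Eventually.of_forall fun y => Continuous.aestronglyMeasurable (by fun_prop)) (hHi x)
    (Continuous.aestronglyMeasurable (by fun_prop))
    (ae_of_all _ fun z y hy => by
      refine (aux_growth G hB hG hb y z).trans ?_
      rw [Metric.mem_ball, Real.dist_eq] at hy
      have : |y| ≤ |x| + 1 := by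
        have := abs_add_le (y - x) x
        rw [sub_add_cancel] at this
        linarith
      gcongr)
    (hl.const_mul _)
    (ae_of_all _ fun z y hy => by
      exact (hH (y - z)).comp_sub_const y z)
  exact this.2

lemma aux_prim {b B : ℝ} (G : ℝ → ℝ) (hc : Continuous G) (hB : 0 ≤ B) (hb : 0 < b) (c : ℝ) (hcb : 0 ≤ c)
    (hG : ∀ x, |G x| ≤ B * Real.exp (c * |x|)) : 
    (∀ x, HasDerivAt (fun x => ∫ t in (0:ℝ)..x, G t) (G x) x) ∧
    ∀ x, |∫ t in (0:ℝ)..x, G t| ≤ B / b * Real.exp ((c + b) * |x|) := by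
  constructor
  · intro x
    exact intervalIntegral.integral_hasDerivAt_right (hc.intervalIntegrable _ _)
      (hc.stronglyMeasurableAtFilter _ _) hc.continuousAt
  · intro x
    have h1 : ‖∫ t in (0:ℝ)..x, G t‖ ≤ B * Real.exp (c * |x|) * |x - 0| := by
      apply intervalIntegral.norm_integral_le_of_norm_le_const
      intro t ht
      refine (hG t).trans ?_
      have : |t| ≤ |x| := by
        rcases le_total 0 x with h | h
        · rw [uIoc_of_le h] at ht
          rw [abs_of_pos ht.1, abs_of_nonneg h]; exact ht.2
        · rw [uIoc_of_ge h] at ht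
          rw [abs_of_nonpos ht.2, abs_of_nonpos h]; linarith [ht.1]
      gcongr
    rw [Real.norm_eq_abs, sub_zero] at h1
    refine h1.trans ?_
    have h2 : |x| ≤ 1 / b * Real.exp (b * |x|) := by
      rw [one_div, inv_mul_eq_div, le_div_iff₀ hb]
      linarith [Real.add_one_le_exp (b * |x|)]
    calc B * Real.exp (c * |x|) * |x| ≤ B * Real.exp (c * |x|) * (1 / b * Real.exp (b * |x|)) := by gcongr
      _ = _ := by rw [add_mul, Real.exp_add]; ring

lemma aux_taylor (F G Φ : ℝ → ℝ) (hc : Continuous F) (hG : ∀ x, HasDerivAt G (F x) x)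
    (hΦ : ∀ x, HasDerivAt Φ (G x) x) (x z : ℝ) :
    ∫ u in (0:ℝ)..1, z ^ 2 * ((1 - u) * F (x - z * u)) = Φ (x - z) - Φ x + z * G x := by
  have hd : ∀ u : ℝ, HasDerivAt (fun u => Φ (x - z * u) - z * ((1 - u) * G (x - z * u)))
      (z ^ 2 * ((1 - u) * F (x - z * u))) u := by
    intro u
    have h0 : HasDerivAt (fun u : ℝ => x - z * u) (-z) u := by
      simpa using ((hasDerivAt_id u).const_mul z).const_sub x
    have h1 := (hΦ (x - z * u)).comp u h0
    have h2 := (hG (x - z * u)).comp u h0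
    have h3 : HasDerivAt (fun u : ℝ => 1 - u) (-1) u := by simpa using (hasDerivAt_id u).const_sub 1
    have h4 := h1.sub ((h3.mul h2).const_mul z)
    refine HasDerivAt.congr_deriv (f := fun u => Φ (x - z * u) - z * ((1 - u) * G (x - z * u))) h4 ?_
    simp only [Function.comp]
    ring
  rw [intervalIntegral.integral_eq_sub_of_hasDerivAt (fun u _ => hd u)
    (Continuous.intervalIntegrable (by fun_prop) _ _)]
  simp
  ring

noncomputable def clp (u : ℝ) : ℝ := max 0 (min u 1)

lemma clp_cont : Continuous clp := by unfold clp; fun_prop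
lemma clp_abs (u : ℝ) : |clp u| ≤ 1 := by
  unfold clp
  rw [abs_of_nonneg (le_max_left _ _)]
  exact max_le (by norm_num) (min_le_right _ _)
lemma clp_eq {u : ℝ} (hu : u ∈ Icc (0:ℝ) 1) : clp u = u := by
  unfold clp; rw [min_eq_left hu.2, max_eq_right hu.1]

noncomputable def lsq (l : Measure ℝ) : Measure ℝ := l.withDensity fun z => ENNReal.ofReal (z ^ 2)
noncomputable def UU : Measure ℝ := (volume.restrict (Icc (0:ℝ) 1)).withDensity fun u => ENNReal.ofReal (1 - u)
noncomputable def kap (l : Measure ℝ) : Measure ℝ := ((lsq l).prod UU).map fun p => p.1 * clp p.2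

instance : IsFiniteMeasure UU := by
  apply isFiniteMeasure_withDensity_ofReal
  have : IntegrableOn (fun u : ℝ => 1 - u) (Icc (0:ℝ) 1) := by
    apply Continuous.integrableOn_Icc; fun_prop
  exact this.2

lemma aux_sq_exp {d : ℝ} (hd : 0 < d) (z : ℝ) : z ^ 2 ≤ 8 / d ^ 2 * Real.exp (d / 2 * |z|) := by
  have := Real.quadratic_le_exp_of_nonneg (x := d / 2 * |z|) (by positivity)
  have h0 : 0 ≤ d / 2 * |z| := by positivity
  have h2 : (d / 2 * |z|) ^ 2 / 2 = d ^ 2 * z ^ 2 / 8 := by rw [mul_pow, sq_abs]; ring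
  rw [div_mul_eq_mul_div, le_div_iff₀ (by positivity)]
  nlinarith

lemma lsq_int (l : Measure ℝ) (f : ℝ → ℝ) : Integrable f (lsq l) ↔ Integrable (fun z => z ^ 2 * f z) l := by
  unfold lsq
  rw [integrable_withDensity_iff_integrable_smul₀' (by fun_prop) (by simp)]
  simp only [smul_eq_mul, ENNReal.toReal_ofReal (sq_nonneg _)]

lemma lsq_integral (l : Measure ℝ) (f : ℝ → ℝ) : ∫ z, f z ∂(lsq l) = ∫ z, z ^ 2 * f z ∂l := by
  unfold lsq
  rw [integral_withDensity_eq_integral_toReal_smul₀ (by fun_prop) (by simp)]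
  simp only [smul_eq_mul, ENNReal.toReal_ofReal (sq_nonneg _)]

lemma UU_integral (f : ℝ → ℝ) : ∫ u, f (clp u) ∂UU = ∫ u in (0:ℝ)..1, (1 - u) * f u := by
  unfold UU
  rw [integral_withDensity_eq_integral_toReal_smul₀ (by fun_prop) (by simp),
    intervalIntegral.integral_of_le zero_le_one, ← integral_Icc_eq_integral_Ioc]
  apply setIntegral_congr_fun measurableSet_Icc
  intro u hu
  simp only [smul_eq_mul, clp_eq hu]
  rw [ENNReal.toReal_ofReal (by linarith [hu.2])]

section kap
variable (l : Measure ℝ) [IsProbabilityMeasure l] {d : ℝ} 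

lemma lsq_exp (hd : 0 < d) (hl : Integrable (fun z : ℝ => Real.exp (d * |z|)) l) :
    Integrable (fun z => Real.exp (d / 2 * |z|)) (lsq l) := by
  rw [lsq_int]
  refine (hl.const_mul (8 / d ^ 2)).mono' (Continuous.aestronglyMeasurable (by fun_prop)) (ae_of_all _ fun z => ?_)
  rw [Real.norm_eq_abs, abs_of_nonneg (by positivity)]
  have := mul_le_mul_of_nonneg_right (aux_sq_exp hd z) (Real.exp_pos (d / 2 * |z|)).le
  refine this.trans (le_of_eq ?_)
  rw [mul_assoc, ← Real.exp_add]; ring_nf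

lemma lsq_finite (hd : 0 < d) (hl : Integrable (fun z : ℝ => Real.exp (d * |z|)) l) : IsFiniteMeasure (lsq l) := by
  have h1 := lsq_exp l hd hl
  have : Integrable (fun _ : ℝ => (1:ℝ)) (lsq l) := by
    refine h1.mono' (by fun_prop) (ae_of_all _ fun z => ?_)
    rw [norm_one]; exact Real.one_le_exp (by positivity)
  rw [integrable_const_iff] at this
  rcases this with h | h
  · norm_num at h
  · exact h

lemma kap_finite (hd : 0 < d) (hl : Integrable (fun z : ℝ => Real.exp (d * |z|)) l) : IsFiniteMeasure (kap l) := by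
  have := lsq_finite l hd hl
  unfold kap; infer_instance

lemma kap_aux_int (hd : 0 < d) (hl : Integrable (fun z : ℝ => Real.exp (d * |z|)) l) (F : ℝ → ℝ)
    (hc : Continuous F) (B : ℝ) (hB : 0 ≤ B) (hF : ∀ z, |F z| ≤ B * Real.exp (d / 2 * |z|)) :
    Integrable (fun p : ℝ × ℝ => F (p.1 * clp p.2)) ((lsq l).prod UU) := by
  have := lsq_finite l hd hl
  have h1 := ((lsq_exp l hd hl).const_mul B).mul_prod (integrable_const (μ := UU) (1:ℝ))
  have hcc := clp_cont
  refine h1.mono' (Continuous.aestronglyMeasurable (by fun_prop)) (ae_of_all _ fun p => ?_)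
  rw [mul_one]
  refine (hF _).trans ?_
  have : |p.1 * clp p.2| ≤ |p.1| := by
    rw [abs_mul]; exact mul_le_of_le_one_right (abs_nonneg _) (clp_abs _)
  gcongr

lemma kap_exp (hd : 0 < d) (hl : Integrable (fun z : ℝ => Real.exp (d * |z|)) l) :
    Integrable (fun v => Real.exp (d / 2 * |v|)) (kap l) := by
  have hcc := clp_cont
  unfold kap
  rw [integrable_map_measure (Continuous.aestronglyMeasurable (by fun_prop)) (Continuous.aemeasurable (by fun_prop))]
  exact kap_aux_int l hd hl (fun v => Real.exp (d / 2 * |v|)) (by fun_prop) 1 zero_le_one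
    (fun z => by rw [abs_of_pos (Real.exp_pos _), one_mul])

lemma kap_integral (hd : 0 < d) (hl : Integrable (fun z : ℝ => Real.exp (d * |z|)) l) (F : ℝ → ℝ)
    (hc : Continuous F) (B : ℝ) (hB : 0 ≤ B) (hF : ∀ z, |F z| ≤ B * Real.exp (d / 2 * |z|)) :
    ∫ v, F v ∂(kap l) = ∫ z, (∫ u in (0:ℝ)..1, z ^ 2 * ((1 - u) * F (z * u))) ∂l := by
  have := lsq_finite l hd hl
  have hcc := clp_cont
  unfold kap
  rw [integral_map (Continuous.aemeasurable (by fun_prop)) (Continuous.aestronglyMeasurable (by fun_prop))]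
  rw [integral_prod _ (kap_aux_int l hd hl F hc B hB hF), lsq_integral]
  congr 1; ext z
  rw [UU_integral (fun u => F (z * u)), intervalIntegral.integral_const_mul]

lemma kap_mass (hd : 0 < d) (hl : Integrable (fun z : ℝ => Real.exp (d * |z|)) l) :
    (kap l).real univ = (∫ z, z ^ 2 ∂l) / 2 := by
  have h := kap_integral l hd hl (fun _ => 1) continuous_const 1 zero_le_one (fun z => by
    rw [abs_one, one_mul]; exact Real.one_le_exp (by positivity))
  have := kap_finite l hd hl
  rw [integral_const, smul_eq_mul, mul_one] at h
  rw [h, ← integral_div]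
  congr 1; ext z
  rw [intervalIntegral.integral_const_mul]
  simp only [mul_one]
  rw [intervalIntegral.integral_sub (by simp) (by simp), integral_id]
  simp; ring

lemma kap_main (hd : 0 < d) (hl : Integrable (fun z : ℝ => Real.exp (d * |z|)) l)
    (hmean : ∫ z, z ∂l = 0) (F : ℝ → ℝ) (hc : Continuous F) (B b : ℝ) (hB : 0 ≤ B) (hb : 0 < b) (hbd : 3 * b ≤ d)
    (hF : ∀ z, |F z| ≤ B * Real.exp (b * |z|)) (Cs ρ : ℝ) (hρ : 0 < ρ)
    (hs : ∀ x, 0 ≤ x → |cv l F x - F x| ≤ Cs * Real.exp (-ρ * x)) :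
    ∃ M c C : ℝ, ∀ x, 0 ≤ x → |cv (kap l) F x - (M * x + c)| ≤ C * Real.exp (-ρ * x) := by
  obtain ⟨hG, hGb⟩ := aux_prim F hc hB hb b hb.le hF
  set G : ℝ → ℝ := fun x => ∫ t in (0:ℝ)..x, F t with hGdef
  have hGc : Continuous G := continuous_iff_continuousAt.2 fun x => (hG x).continuousAt
  obtain ⟨hΦ, hΦb⟩ := aux_prim G hGc (by positivity : 0 ≤ B / b) hb (b + b) (by positivity) hGb
  set Φ : ℝ → ℝ := fun x => ∫ t in (0:ℝ)..x, G t with hΦdef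
  have hΦc : Continuous Φ := continuous_iff_continuousAt.2 fun x => (hΦ x).continuousAt
  have l1 := aux_exp_int_le (by linarith : b ≤ d) l hl
  have l2 := aux_exp_int_le (by linarith : b + b ≤ d) l hl
  have l3 := aux_exp_int_le (by linarith : b + b + b ≤ d) l hl
  have iG := cv_int' G hGc (by positivity : 0 ≤ B / b) hGb (by positivity) l l2
  have iΦ := cv_int' Φ hΦc (by positivity : 0 ≤ B / b / b) hΦb (by positivity) l l3
  have dG := aux_cv_deriv F G hc hB hb hF hG l l1 iG
  have dΦ := aux_cv_deriv G Φ hGc (by positivity : 0 ≤ B / b) (by positivity) hGb hΦ l l2 iΦ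
  have iz := aux_int_of_exp (l := l) hd hl
  have hΨ : ∀ x, cv (kap l) F x = cv l Φ x - Φ x := by
    intro x
    unfold cv
    rw [kap_integral l hd hl (fun v => F (x - v)) (by fun_prop) (B * Real.exp (b * |x|)) (by positivity) (by
      intro z
      refine (aux_growth F hB hF hb x z).trans ?_
      have : b ≤ d / 2 := by linarith
      gcongr)]
    have : ∀ z, ∫ u in (0:ℝ)..1, z ^ 2 * ((1 - u) * F (x - z * u)) = (Φ (x - z) - Φ x) + z * G x :=
      fun z => aux_taylor F G Φ hc hG hΦ x z
    simp only [this]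
    have i1 : Integrable (fun z => Φ (x - z) - Φ x) l := (iΦ x).sub (integrable_const _)
    have i2 : Integrable (fun z => z * G x) l := iz.mul_const _
    rw [integral_add i1 i2, integral_sub (iΦ x) (integrable_const _), integral_mul_const, hmean]
    simp
  obtain ⟨M, hM⟩ := aux_limit (fun x => cv l G x - G x) (fun x => cv l F x - F x)
    (fun x => (dG x).sub (hG x)) Cs ρ hρ hs
  obtain ⟨c, hc'⟩ := aux_limit (fun x => cv l Φ x - Φ x - M * x) (fun x => cv l G x - G x - M)
    (fun x => ((dΦ x).sub (hΦ x)).sub (by simpa using (hasDerivAt_id x).const_mul M)) (Cs / ρ) ρ hρ hM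
  refine ⟨M, c, Cs / ρ / ρ, fun x hx => ?_⟩
  rw [hΨ, ← sub_sub]
  exact hc' x hx

end kap


noncomputable def ll (ζ : ℝ → ℝ) : Measure ℝ := volume.withDensity fun x => ENNReal.ofReal (ζ x)

noncomputable def FF (ν : Measure ℝ) (x : ℝ) : ℝ := (ν (Iic x)).toReal

lemma ll_Ioc_le (ζ : ℝ → ℝ) (C d η : ℝ) (hη : 0 < η) (hηd : η ≤ d) (hC : 0 < C)
    (hdec : ∀ x, ζ x ≤ C * Real.exp (-d * |x|)) (a b : ℝ) :
    ll ζ (Ioc a b) ≤ ENNReal.ofReal (C * Real.exp (η * b)) * ENNReal.ofReal (b - a) := by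
  unfold ll
  rw [withDensity_apply _ measurableSet_Ioc, ← Real.volume_Ioc, ← setLIntegral_const]
  apply setLIntegral_mono measurable_const
  intro z hz
  apply ENNReal.ofReal_le_ofReal
  refine (hdec z).trans ?_
  apply mul_le_mul_of_nonneg_left _ hC.le
  apply Real.exp_le_exp.2
  have h1 : η * z ≤ η * b := mul_le_mul_of_nonneg_left hz.2 hη.le
  have h2 : -|z| ≤ z := neg_abs_le z
  have h3 : 0 ≤ |z| := abs_nonneg z
  nlinarith



lemma FF_diff (ν : Measure ℝ) (hfin : ∀ x : ℝ, ν (Iic x) < ⊤) {a b : ℝ} (hab : a ≤ b) : FF ν b - FF ν a = (ν (Ioc a b)).toReal := by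
  unfold FF
  rw [← Iic_union_Ioc_eq_Iic hab, measure_union (by
    rw [Set.disjoint_left]; intro x hx hx2; exact absurd hx2.1 (not_lt.2 hx)) measurableSet_Ioc,
    ENNReal.toReal_add (hfin a).ne ((measure_mono Ioc_subset_Iic_self).trans_lt (hfin b)).ne]
  ring


lemma nu_growth (ν : Measure ℝ) (η : ℝ) (hη : 0 < η) (x : ℝ) :
    ν (Iic x) ≤ ENNReal.ofReal (Real.exp (η * hY x)) * ∫⁻ y, ENNReal.ofReal (Real.exp (-η * hY y)) ∂ν := by
  have hm : Measurable fun y => ENNReal.ofReal (Real.exp (-η * hY y)) := by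
    have := hY_meas
    fun_prop
  have h := mul_meas_ge_le_lintegral hm (ENNReal.ofReal (Real.exp (-η * hY x))) (μ := ν)
  have hsub : Iic x ⊆ {y | ENNReal.ofReal (Real.exp (-η * hY x)) ≤ ENNReal.ofReal (Real.exp (-η * hY y))} := by
    intro y hy
    apply ENNReal.ofReal_le_ofReal
    apply Real.exp_le_exp.2
    have := hY_strictMono.monotone hy
    nlinarith
  have e : ENNReal.ofReal (Real.exp (η * hY x)) * ENNReal.ofReal (Real.exp (-η * hY x)) = 1 := by
    rw [← ENNReal.ofReal_mul (Real.exp_pos _).le, ← Real.exp_add]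
    simp
  calc ν (Iic x) = ENNReal.ofReal (Real.exp (η * hY x)) * (ENNReal.ofReal (Real.exp (-η * hY x)) * ν (Iic x)) := by
        rw [← mul_assoc, e, one_mul]
    _ ≤ _ := by
        gcongr
        exact (mul_le_mul_right (measure_mono hsub) _).trans h

lemma nu_Ioc (ζ : ℝ → ℝ) (C d η : ℝ) (hη : 0 < η) (hηd : η ≤ d) (hC : 0 < C)
    (hdec : ∀ x, ζ x ≤ C * Real.exp (-d * |x|)) (ν : Measure ℝ)
    (hinv : ∀ g : ℝ → ℝ≥0∞, Measurable g → ∫⁻ z, g z ∂ν = ∫⁻ y, ∫⁻ z, g (z + hY y) ∂(ll ζ) ∂ν)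
    (a b : ℝ) :
    ν (Ioc a b) ≤ ENNReal.ofReal (C * Real.exp (η * b)) * ENNReal.ofReal (b - a) *
      ∫⁻ y, ENNReal.ofReal (Real.exp (-η * hY y)) ∂ν := by
  have h := hinv ((Ioc a b).indicator 1) (measurable_one.indicator measurableSet_Ioc)
  rw [lintegral_indicator_one measurableSet_Ioc] at h
  rw [h]
  have hm : Measurable fun y => ENNReal.ofReal (Real.exp (-η * hY y)) := by
    have := hY_meas
    fun_prop
  rw [← lintegral_const_mul _ hm]
  apply lintegral_mono
  intro y
  have e : ∀ z, (Ioc a b).indicator (1 : ℝ → ℝ≥0∞) (z + hY y) = (Ioc (a - hY y) (b - hY y)).indicator 1 z := by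
    intro z
    simp only [indicator, mem_Ioc, sub_lt_iff_lt_add, le_sub_iff_add_le, Pi.one_apply]
  simp only [e]
  rw [lintegral_indicator_one measurableSet_Ioc]
  refine (ll_Ioc_le ζ C d η hη hηd hC hdec _ _).trans (le_of_eq ?_)
  have e1 : b - hY y - (a - hY y) = b - a := by ring
  have e2 : C * Real.exp (η * (b - hY y)) = C * Real.exp (η * b) * Real.exp (-η * hY y) := by
    rw [mul_assoc, ← Real.exp_add]; ring_nf
  rw [e1, e2, ENNReal.ofReal_mul (by positivity)]
  ring

lemma aux_Ffacts (ζ : ℝ → ℝ) [IsProbabilityMeasure (ll ζ)] (C d η ρ : ℝ) (hη : 0 < η) (hηd : η ≤ d) (hC : 0 < C)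
    (hη2 : η ≤ 1 / 2) (hρ : 0 < ρ) (hρ2 : ρ ≤ 1 / 2)
    (hdec : ∀ x, ζ x ≤ C * Real.exp (-d * |x|)) (ν : Measure ℝ) [SigmaFinite ν]
    (hinv : ∀ g : ℝ → ℝ≥0∞, Measurable g → ∫⁻ z, g z ∂ν = ∫⁻ y, ∫⁻ z, g (z + hY y) ∂(ll ζ) ∂ν)
    (hfin : ∀ x : ℝ, ν (Iic x) < ⊤)
    (hT : ∫⁻ y, ENNReal.ofReal (Real.exp (-η * hY y)) ∂ν < ⊤)
    (hl1 : Integrable (fun z : ℝ => Real.exp (η * |z|)) (ll ζ))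
    (hl2 : Integrable (fun z : ℝ => Real.exp (ρ * |z|)) (ll ζ)) :
    Continuous (FF ν) ∧ (∃ B, 0 ≤ B ∧ ∀ x, |FF ν x| ≤ B * Real.exp (η * |x|)) ∧
    ∃ Cs, 0 ≤ Cs ∧ ∀ x, |cv (ll ζ) (FF ν) x - FF ν x| ≤ Cs * Real.exp (-ρ * x) := by
  set T := ∫⁻ y, ENNReal.ofReal (Real.exp (-η * hY y)) ∂ν with hTdef
  set l := ll ζ with hl
  have hT0 : 0 ≤ T.toReal := ENNReal.toReal_nonneg
  have hF0 : ∀ x, 0 ≤ FF ν x := fun x => ENNReal.toReal_nonneg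
  have hIoc : ∀ a b, a ≤ b → (ν (Ioc a b)).toReal ≤ C * T.toReal * Real.exp (η * b) * (b - a) := by
    intro a b hab
    have h := ENNReal.toReal_mono (by finiteness) (nu_Ioc ζ C d η hη hηd hC hdec ν hinv a b)
    rw [ENNReal.toReal_mul, ENNReal.toReal_mul, ENNReal.toReal_ofReal (by positivity),
      ENNReal.toReal_ofReal (by linarith)] at h
    exact h.trans (le_of_eq (by ring))
  have hFm : Monotone (FF ν) := fun a b hab =>
    ENNReal.toReal_mono (hfin b).ne (measure_mono (Iic_subset_Iic.2 hab))
  have hcont : Continuous (FF ν) := by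
    rw [continuous_iff_continuousAt]
    intro x
    have hK : ∀ a b, a ≤ b → b ≤ x + 1 → |FF ν b - FF ν a| ≤ C * T.toReal * Real.exp (η * (x + 1)) * |b - a| := by
      intro a b hab hb
      rw [abs_of_nonneg (sub_nonneg.2 (hFm hab)), abs_of_nonneg (sub_nonneg.2 hab), FF_diff ν hfin hab]
      refine (hIoc a b hab).trans ?_
      have : 0 ≤ b - a := by linarith
      gcongr
    rw [ContinuousAt, tendsto_iff_norm_sub_tendsto_zero]
    have hlim : Tendsto (fun y => C * T.toReal * Real.exp (η * (x + 1)) * |y - x|) (nhds x) (nhds 0) := by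
      have : Continuous (fun y => C * T.toReal * Real.exp (η * (x + 1)) * |y - x|) := by fun_prop
      simpa using this.tendsto x
    refine squeeze_zero' (Eventually.of_forall fun y => norm_nonneg _) ?_ hlim
    filter_upwards [Iio_mem_nhds (by linarith : x < x + 1)] with y hy
    rw [Real.norm_eq_abs]
    rcases le_total x y with h | h
    · exact hK x y h (le_of_lt hy)
    · rw [abs_sub_comm, abs_sub_comm y x]
      exact hK y x h (by linarith)
  have hgrow : ∀ x, |FF ν x| ≤ (T.toReal * Real.exp η) * Real.exp (η * |x|) := by
    intro x
    rw [abs_of_nonneg (hF0 x)]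
    have h := ENNReal.toReal_mono (by finiteness) (nu_growth ν η hη x)
    rw [ENNReal.toReal_mul, ENNReal.toReal_ofReal (by positivity)] at h
    have h2 : Real.exp (η * hY x) ≤ Real.exp η * Real.exp (η * |x|) := by
      rw [← Real.exp_add]
      apply Real.exp_le_exp.2
      have := hY_le x
      nlinarith
    calc FF ν x ≤ Real.exp (η * hY x) * T.toReal := h
      _ ≤ Real.exp η * Real.exp (η * |x|) * T.toReal := by gcongr
      _ = _ := by ring
  refine ⟨hcont, ⟨_, by positivity, hgrow⟩, ?_⟩
  -- G
  have hsub : ∀ t, {y | hY y ≤ t} ⊆ Iic t := fun t y hy => (lt_hY y).le.trans hy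
  have hms : ∀ t, MeasurableSet {y | hY y ≤ t} := fun t => hY_meas measurableSet_Iic
  set g : ℝ → ℝ≥0∞ := fun t => ν {y | hY y ≤ t} with hg
  have hgfin : ∀ t, g t < ⊤ := fun t => (measure_mono (hsub t)).trans_lt (hfin t)
  have hgmono : Monotone g := fun a b hab => measure_mono fun y hy => le_trans hy hab
  have hgmeas : Measurable g := hgmono.measurable
  have hconv : ∀ x, ν (Iic x) = ∫⁻ z, g (x - z) ∂l := by
    intro x
    have h := hinv ((Iic x).indicator 1) (measurable_one.indicator measurableSet_Iic)
    rw [lintegral_indicator_one measurableSet_Iic] at h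
    rw [h, lintegral_lintegral_swap]
    · apply lintegral_congr
      intro z
      have e : ∀ y, (Iic x).indicator (1 : ℝ → ℝ≥0∞) (z + hY y) = ({y | hY y ≤ x - z}).indicator 1 y := by
        intro y
        simp only [indicator, mem_Iic, mem_ofPred_eq, Pi.one_apply, le_sub_iff_add_le, add_comm]
      simp only [e]
      rw [lintegral_indicator_one (hms _)]
    · apply Measurable.aemeasurable
      have := hY_meas
      exact (measurable_one.indicator measurableSet_Iic).comp (by fun_prop)
  have hFG : ∀ x, FF ν x = ∫ z, (g (x - z)).toReal ∂l := by
    intro x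
    have hm2 : Measurable fun z => g (x - z) := hgmeas.comp (by fun_prop : Measurable fun z => x - z)
    rw [integral_toReal hm2.aemeasurable (ae_of_all _ fun z => hgfin _)]
    unfold FF
    rw [hconv]
  have iF := cv_int' (FF ν) hcont (by positivity) hgrow hη l hl1
  have iG : ∀ x, Integrable (fun z => (g (x - z)).toReal) l := by
    intro x
    refine (iF x).mono' (hgmeas.comp (by fun_prop : Measurable fun z => x - z)).ennreal_toReal.aestronglyMeasurable
      (ae_of_all _ fun z => ?_)
    rw [Real.norm_eq_abs, abs_of_nonneg ENNReal.toReal_nonneg]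
    exact ENNReal.toReal_mono (hfin _).ne (measure_mono (hsub _))
  have hr : ∀ t, 0 ≤ FF ν t - (g t).toReal ∧ FF ν t - (g t).toReal ≤
      (2 * C * T.toReal + FF ν 1 * Real.exp 1) * Real.exp (-ρ * t) := by
    intro t
    have h0 : (g t).toReal ≤ FF ν t := ENNReal.toReal_mono (hfin _).ne (measure_mono (hsub _))
    refine ⟨by linarith, ?_⟩
    rcases le_or_gt 1 t with ht | ht
    · have hsm : 2 * Real.exp (-t) < 1 := by
        have : Real.exp (-t) ≤ Real.exp (-1) := Real.exp_le_exp.2 (by linarith)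
        have h3 : Real.exp (-1) < 1 / 2 := by
          rw [Real.exp_neg, inv_eq_one_div]
          apply one_div_lt_one_div_of_lt (by norm_num)
          linarith [Real.exp_one_gt_d9]
        linarith
      have hss : Iic t \ {y | hY y ≤ t} ⊆ Ioc (t - 2 * Real.exp (-t)) t := by
        rintro y ⟨hy1, hy2⟩
        rw [mem_ofPred_eq, not_le] at hy2
        refine ⟨?_, hy1⟩
        have h4 := hY_sub_le y
        have h5 : Real.exp (-hY y) < Real.exp (-t) := Real.exp_lt_exp.2 (by linarith)
        have h6 : t - 2 * Real.exp (-t) < max y 0 := by linarith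
        rcases lt_max_iff.1 h6 with h | h
        · exact h
        · linarith
      have hd : FF ν t - (g t).toReal = (ν (Iic t \ {y | hY y ≤ t})).toReal := by
        rw [measure_sdiff (hsub t) (hms t).nullMeasurableSet (hgfin t).ne, ENNReal.toReal_sub_of_le (measure_mono (hsub t)) (hfin t).ne]
        rfl
      rw [hd]
      have h7 : (ν (Iic t \ {y | hY y ≤ t})).toReal ≤ (ν (Ioc (t - 2 * Real.exp (-t)) t)).toReal :=
        ENNReal.toReal_mono ((measure_mono Ioc_subset_Iic_self).trans_lt (hfin t)).ne (measure_mono hss)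
      have h8 := hIoc (t - 2 * Real.exp (-t)) t (by linarith [Real.exp_pos (-t)])
      have h9 : Real.exp (η * t) * Real.exp (-t) ≤ Real.exp (-ρ * t) := by
        rw [← Real.exp_add]; apply Real.exp_le_exp.2; nlinarith
      calc _ ≤ C * T.toReal * Real.exp (η * t) * (t - (t - 2 * Real.exp (-t))) := h7.trans h8
        _ = 2 * C * T.toReal * (Real.exp (η * t) * Real.exp (-t)) := by ring
        _ ≤ 2 * C * T.toReal * Real.exp (-ρ * t) := by gcongr
        _ ≤ _ := by
          have := hF0 1
          apply mul_le_mul_of_nonneg_right _ (Real.exp_pos _).le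
          have : 0 ≤ FF ν 1 * Real.exp 1 := by positivity
          linarith
    · have h1 : FF ν t - (g t).toReal ≤ FF ν 1 := by
        have := hFm ht.le
        have : 0 ≤ (g t).toReal := ENNReal.toReal_nonneg
        linarith
      have h2 : 1 ≤ Real.exp 1 * Real.exp (-ρ * t) := by
        rw [← Real.exp_add]; apply Real.one_le_exp; nlinarith
      have := hF0 1
      calc _ ≤ FF ν 1 * 1 := by linarith
        _ ≤ FF ν 1 * (Real.exp 1 * Real.exp (-ρ * t)) := by gcongr
        _ ≤ _ := by
          rw [add_mul, mul_assoc (FF ν 1)]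
          have : 0 ≤ 2 * C * T.toReal * Real.exp (-ρ * t) := by positivity
          linarith
  set Cr := 2 * C * T.toReal + FF ν 1 * Real.exp 1 with hCr
  have hCr0 : 0 ≤ Cr := by have := hF0 1; positivity
  have hE0 : 0 ≤ ∫ z, Real.exp (ρ * |z|) ∂l := integral_nonneg fun z => (Real.exp_pos _).le
  refine ⟨Cr * ∫ z, Real.exp (ρ * |z|) ∂l, by positivity, fun x => ?_⟩
  have e : cv l (FF ν) x - FF ν x = ∫ z, (FF ν (x - z) - (g (x - z)).toReal) ∂l := by
    rw [integral_sub (iF x) (iG x), ← hFG]; rfl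
  rw [e, ← Real.norm_eq_abs]
  refine (norm_integral_le_of_norm_le (hl2.const_mul (Cr * Real.exp (-ρ * x))) (ae_of_all _ fun z => ?_)).trans ?_
  · rw [Real.norm_eq_abs, abs_of_nonneg (hr _).1, mul_assoc, ← Real.exp_add]
    refine (hr _).2.trans ?_
    apply mul_le_mul_of_nonneg_left _ hCr0
    apply Real.exp_le_exp.2
    nlinarith [le_abs_self z]
  · rw [integral_const_mul]
    exact le_of_eq (by ring)


lemma ll_int (ζ : ℝ → ℝ) (hm : Measurable ζ) (hnn : ∀ x, 0 ≤ ζ x) (f : ℝ → ℝ) :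
    Integrable f (ll ζ) ↔ Integrable (fun z => ζ z * f z) := by
  unfold ll
  rw [integrable_withDensity_iff_integrable_smul₀' (by fun_prop) (by simp)]
  simp only [smul_eq_mul, ENNReal.toReal_ofReal (hnn _)]

lemma ll_integral (ζ : ℝ → ℝ) (hm : Measurable ζ) (hnn : ∀ x, 0 ≤ ζ x) (f : ℝ → ℝ) :
    ∫ z, f z ∂(ll ζ) = ∫ z, ζ z * f z := by
  unfold ll
  rw [integral_withDensity_eq_integral_toReal_smul₀ (by fun_prop) (by simp)]
  simp only [smul_eq_mul, ENNReal.toReal_ofReal (hnn _)]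

lemma ll_prob (ζ : ℝ → ℝ) (hnn : ∀ x, 0 ≤ ζ x) (hi : Integrable ζ)
    (h1 : ∫ x, ζ x = 1) : IsProbabilityMeasure (ll ζ) := by
  constructor
  unfold ll
  rw [withDensity_apply _ MeasurableSet.univ, Measure.restrict_univ,
    ← ofReal_integral_eq_lintegral_ofReal hi (ae_of_all _ hnn), h1, ENNReal.ofReal_one]

lemma ll_exp (ζ : ℝ → ℝ) (hm : Measurable ζ) (hnn : ∀ x, 0 ≤ ζ x) (C d c : ℝ) (hcd : c < d)
    (hdec : ∀ x, ζ x ≤ C * Real.exp (-d * |x|)) : Integrable (fun z => Real.exp (c * |z|)) (ll ζ) := by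
  rw [ll_int ζ hm hnn]
  refine ((aux_integrable_exp_neg_abs (by linarith : 0 < d - c)).const_mul C).mono'
    (by fun_prop) (ae_of_all _ fun z => ?_)
  rw [Real.norm_eq_abs, abs_of_nonneg (mul_nonneg (hnn z) (Real.exp_pos _).le)]
  refine (mul_le_mul_of_nonneg_right (hdec z) (Real.exp_pos _).le).trans (le_of_eq ?_)
  rw [mul_assoc, ← Real.exp_add]; ring_nf

lemma ll_pos (ζ : ℝ → ℝ) [IsProbabilityMeasure (ll ζ)] (f : ℝ → ℝ) (hf0 : ∀ z, 0 ≤ f z) (hf : ∀ z, f z = 0 → z = 0)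
    (hfi : Integrable f (ll ζ)) : 0 < ∫ z, f z ∂(ll ζ) := by
  rcases (integral_nonneg hf0 : 0 ≤ ∫ z, f z ∂(ll ζ)).lt_or_eq with h | h
  · exact h
  · exfalso
    have h1 := (integral_eq_zero_iff_of_nonneg hf0 hfi).1 h.symm
    have h2 : ∀ᵐ z ∂(ll ζ), z ≠ 0 := by
      apply (withDensity_absolutelyContinuous volume _).ae_le
      exact compl_mem_ae_iff.2 (measure_singleton (0:ℝ))
    obtain ⟨z, hz1, hz2⟩ := (h1.and h2).exists
    exact hz2 (hf z hz1)

lemma ll_low (ζ : ℝ → ℝ) (hnn : ∀ x, 0 ≤ ζ x) (hcont : Continuous ζ) (h1 : ∫ x, ζ x = 1) :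
    ∃ c₀ r₀ a : ℝ, 0 < c₀ ∧ 0 < r₀ ∧
      ENNReal.ofReal c₀ • volume.restrict (Icc (a - 2 * r₀) (a + 2 * r₀)) ≤ ll ζ := by
  have : ∃ a, 0 < ζ a := by
    by_contra! h
    have : ∀ x, ζ x = 0 := fun x => le_antisymm (h x) (hnn x)
    simp [this] at h1
  obtain ⟨a, ha⟩ := this
  have hev : ∀ᶠ x in nhds a, ζ a / 2 < ζ x := hcont.continuousAt.eventually (lt_mem_nhds (by linarith))
  rw [Metric.eventually_nhds_iff] at hev
  obtain ⟨ε, hε, h⟩ := hev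
  refine ⟨ζ a / 2, ε / 4, a, by linarith, by linarith, ?_⟩
  rw [Measure.le_iff]
  intro s hs
  unfold ll
  rw [withDensity_apply _ hs, Measure.smul_apply, Measure.restrict_apply hs, smul_eq_mul, ← setLIntegral_const]
  refine le_trans ?_ (lintegral_mono_set (inter_subset_left (t := Icc (a - 2 * (ε / 4)) (a + 2 * (ε / 4)))))
  apply setLIntegral_mono' (hs.inter measurableSet_Icc)
  intro x hx
  apply ENNReal.ofReal_le_ofReal
  apply (h _).le
  rw [Real.dist_eq, abs_lt]
  constructor <;> linarith [hx.2.1, hx.2.2]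

lemma aux_holder_cont (ζ : ℝ → ℝ) (θ : ℝ) (hθ0 : 0 < θ) (Cθ : ℝ)
    (hHolder : ∀ x y : ℝ, |ζ x - ζ y| ≤ Cθ * |x - y| ^ θ) : Continuous ζ := by
  rw [continuous_iff_continuousAt]
  intro x
  rw [ContinuousAt, tendsto_iff_norm_sub_tendsto_zero]
  have hlim : Tendsto (fun y => Cθ * |y - x| ^ θ) (nhds x) (nhds 0) := by
    have : Continuous (fun y => Cθ * |y - x| ^ θ) :=
      continuous_const.mul ((by fun_prop : Continuous fun y => |y - x|).rpow_const fun _ => Or.inr hθ0.le)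
    have h := this.tendsto x
    simpa [Real.zero_rpow hθ0.ne'] using h
  exact squeeze_zero (fun y => norm_nonneg _) (fun y => hHolder y x) hlim

lemma aux_weight (η d C1 C2 : ℝ) (hη : 0 < η) (hηd : 3 * η ≤ 2 * d) (q : ℝ → ℝ) (hC1 : 0 ≤ C1) (hC2 : 0 ≤ C2)
    (h1 : ∀ x, 0 ≤ x → |q x| ≤ C1 * Real.exp (-d * x)) (h2 : ∀ x, |q x| ≤ C2 * Real.exp (η / 2 * |x|)) (R : ℝ) :
    ∫ x, ww η R x * (q x) ^ 2 ≤ ((C1 ^ 2 + C2 ^ 2) * ∫ x, Real.exp (-η * |x|)) * Real.exp (-(2 * η) * R) := by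
  have hi := (aux_integrable_exp_neg_abs hη).const_mul ((C1 ^ 2 + C2 ^ 2) * Real.exp (-(2 * η) * R))
  have := norm_integral_le_of_norm_le hi (f := fun x => ww η R x * (q x) ^ 2) (ae_of_all _ fun x => by
    rw [Real.norm_eq_abs, abs_of_nonneg (mul_nonneg (ww_pos _ _ _).le (sq_nonneg _))]
    have hw : ww η R x ≤ Real.exp (2 * η * x) * Real.exp (-(2 * η) * R) := by
      unfold ww
      rw [← Real.exp_add]
      apply Real.exp_le_exp.2
      nlinarith [neg_abs_le (x - R)]
    have hq : Real.exp (2 * η * x) * (q x) ^ 2 ≤ (C1 ^ 2 + C2 ^ 2) * Real.exp (-η * |x|) := by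
      rw [← sq_abs]
      rcases le_total 0 x with hx | hx
      · have := pow_le_pow_left₀ (abs_nonneg _) (h1 x hx) 2
        calc Real.exp (2 * η * x) * |q x| ^ 2 ≤ Real.exp (2 * η * x) * (C1 * Real.exp (-d * x)) ^ 2 := by gcongr
          _ = C1 ^ 2 * (Real.exp (2 * η * x) * (Real.exp (-d * x) * Real.exp (-d * x))) := by ring
          _ ≤ C1 ^ 2 * Real.exp (-η * |x|) := by
            rw [← Real.exp_add, ← Real.exp_add, abs_of_nonneg hx]
            gcongr
            nlinarith
          _ ≤ _ := by gcongr; nlinarith [sq_nonneg C2]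
      · have := pow_le_pow_left₀ (abs_nonneg _) (h2 x) 2
        calc Real.exp (2 * η * x) * |q x| ^ 2 ≤ Real.exp (2 * η * x) * (C2 * Real.exp (η / 2 * |x|)) ^ 2 := by gcongr
          _ = C2 ^ 2 * (Real.exp (2 * η * x) * (Real.exp (η / 2 * |x|) * Real.exp (η / 2 * |x|))) := by ring
          _ ≤ C2 ^ 2 * Real.exp (-η * |x|) := by
            rw [aux_exp_half, ← Real.exp_add, abs_of_nonpos hx]
            gcongr
            linarith
          _ ≤ _ := by gcongr; nlinarith [sq_nonneg C1]
    calc ww η R x * q x ^ 2 ≤ (Real.exp (2 * η * x) * Real.exp (-(2 * η) * R)) * q x ^ 2 := by gcongr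
      _ = Real.exp (-(2 * η) * R) * (Real.exp (2 * η * x) * q x ^ 2) := by ring
      _ ≤ Real.exp (-(2 * η) * R) * ((C1 ^ 2 + C2 ^ 2) * Real.exp (-η * |x|)) := by gcongr
      _ = _ := by ring)
  rw [integral_const_mul] at this
  exact (le_abs_self _).trans (this.trans (le_of_eq (by ring)))

lemma aux_pointwise (ζ : ℝ → ℝ) (hm : Measurable ζ) (hnn : ∀ x, 0 ≤ ζ x) (C d η A : ℝ) (hη : 0 < η) (hηd : 2 * η ≤ d)
    (hA : 0 ≤ A) (hC : 0 ≤ C)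
    (hdec : ∀ x, ζ x ≤ C * Real.exp (-d * |x|)) (D : ℝ → ℝ) (hc : Continuous D)
    (hD : ∀ x, |D x| ≤ A * Real.exp (η / 2 * |x|)) (K : ℝ) (R : ℝ)
    (hS : ∫ x, ww η R x * (D x) ^ 2 ≤ K * Real.exp (-(2 * η) * R)) :
    |cv (ll ζ) D R| ≤ (C ^ 2 * (∫ x, Real.exp (-d * |x|)) + K) / 2 * Real.exp (-η * R) := by
  have hd : 0 < d := by linarith
  unfold cv
  rw [ll_integral ζ hm hnn]
  have i1 := aux_int_DD (R := R) hη hA hc hD 0 0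
  simp only [sub_zero, ← sq] at i1
  have i2 := i1.comp_sub_left R
  have i3 := aux_integrable_exp_neg_abs hd
  have hb := norm_integral_le_of_norm_le
    ((i3.const_mul (C ^ 2 * Real.exp (-η * R) / 2)).add (i2.const_mul (Real.exp (η * R) / 2)))
    (f := fun z => ζ z * D (R - z)) (ae_of_all _ fun z => by
      simp only [Pi.add_apply]
      rw [Real.norm_eq_abs, abs_mul, abs_of_nonneg (hnn z)]
      have e : ww η R (R - z) = Real.exp (-η * |z|) ^ 2 := by
        unfold ww
        have : R - z - R = -z := by ring
        rw [this, abs_neg, ← Real.exp_nat_mul]; congr 1; push_cast; ring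
      set p := Real.exp (η * R / 2) with hp
      set q := Real.exp (-(η * R / 2)) with hq
      have hpq : p * q = 1 := by rw [hp, hq, ← Real.exp_add]; simp
      have ep : Real.exp (η * R) = p ^ 2 := by
        rw [hp, ← Real.exp_nat_mul]; congr 1; push_cast; ring
      have eq : Real.exp (-η * R) = q ^ 2 := by
        rw [hq, ← Real.exp_nat_mul]; congr 1; push_cast; ring
      have e3 : Real.exp (-d * |z|) = Real.exp (-(d / 2) * |z|) ^ 2 := by
        rw [← Real.exp_nat_mul]; congr 1; push_cast; ring
      have e4 : ζ z ≤ C * Real.exp (-(d / 2) * |z|) * Real.exp (-η * |z|) := by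
        refine (hdec z).trans ?_
        rw [mul_assoc, ← Real.exp_add]
        apply mul_le_mul_of_nonneg_left _ hC
        apply Real.exp_le_exp.2
        nlinarith [abs_nonneg z]
      rw [e, ep, eq, e3, ← sq_abs (D (R - z))]
      set u := Real.exp (-(d / 2) * |z|)
      set v := Real.exp (-η * |z|)
      set t := |D (R - z)|
      have ht : 0 ≤ t := abs_nonneg _
      have e5 : ζ z * t ≤ C * u * v * t := mul_le_mul_of_nonneg_right e4 ht
      have e6 : (C * u * q) * (v * t * p) ≤ ((C * u * q) ^ 2 + (v * t * p) ^ 2) / 2 := by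
        nlinarith [sq_nonneg (C * u * q - v * t * p)]
      have e7 : (C * u * q) * (v * t * p) = C * u * v * t := by
        linear_combination (C * u * v * t) * hpq
      rw [e7] at e6
      refine e5.trans (e6.trans (le_of_eq (by ring))))
  have e8 : ∫ z, ww η R (R - z) * D (R - z) ^ 2 = ∫ x, ww η R x * (D x) ^ 2 :=
    integral_sub_left_eq_self (fun x => ww η R x * (D x) ^ 2) volume R
  have h9 := integral_add (i3.const_mul (C ^ 2 * Real.exp (-η * R) / 2)) (i2.const_mul (Real.exp (η * R) / 2))
  simp only [Pi.add_apply] at hb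
  rw [h9, integral_const_mul, integral_const_mul, e8] at hb
  rw [← Real.norm_eq_abs]
  refine hb.trans ?_
  have h10 : Real.exp (η * R) / 2 * (∫ x, ww η R x * (D x) ^ 2) ≤ Real.exp (η * R) / 2 * (K * Real.exp (-(2 * η) * R)) := by
    gcongr
  have h11 : Real.exp (η * R) * Real.exp (-(2 * η) * R) = Real.exp (-η * R) := by
    rw [← Real.exp_add]; ring_nf
  calc _ ≤ C ^ 2 * Real.exp (-η * R) / 2 * (∫ x, Real.exp (-d * |x|)) + Real.exp (η * R) / 2 * (K * Real.exp (-(2 * η) * R)) := by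
        linarith
    _ = C ^ 2 * Real.exp (-η * R) / 2 * (∫ x, Real.exp (-d * |x|)) + K / 2 * (Real.exp (η * R) * Real.exp (-(2 * η) * R)) := by ring
    _ = _ := by rw [h11]; ring

lemma aux_mpos (ν : Measure ℝ) (hfin : ∀ x : ℝ, ν (Iic x) < ⊤) (hinf : ν univ = ⊤) (m c C : ℝ)
    (h : ∀ x, 0 ≤ x → FF ν x ≤ m * x + c + C) : 0 < m := by
  by_contra! hm
  have hb : ∀ n : ℝ, 0 ≤ n → ν (Iic n) ≤ ENNReal.ofReal (c + C) := by
    intro n hn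
    rw [← ENNReal.ofReal_toReal (hfin n).ne]
    apply ENNReal.ofReal_le_ofReal
    have := h n hn
    unfold FF at this
    nlinarith
  have ht := tendsto_measure_Iic_atTop ν
  have := le_of_tendsto ht (eventually_atTop.2 ⟨0, hb⟩)
  rw [hinf] at this
  simp at this


/-- Proposition: sharp asymptotics at +∞ of the cumulative function of the invariant
measure of the chain Y. -/
theorem stmt7
    (ζ : ℝ → ℝ) (hζmeas : Measurable ζ) (hζnn : ∀ x, 0 ≤ ζ x)
    (hζprob : ∫ x, ζ x = 1)
    (hmean : ∫ x, x * ζ x = 0)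
    (δ : ℝ) (hδ : 0 < δ) (Cδ : ℝ)
    (htail : ∀ x : ℝ, 0 ≤ x → ∫ y in {y : ℝ | x < |y|}, ζ y ≤ Cδ * Real.exp (-δ * x))
    (θ : ℝ) (hθ0 : 0 < θ) (hθ1 : θ ≤ 1) (Cθ : ℝ)
    (hHolder : ∀ x y : ℝ, |ζ x - ζ y| ≤ Cθ * |x - y| ^ θ)
    (ν : Measure ℝ) (hν0 : ν ≠ 0) [SigmaFinite ν]
    (hinv : IsInvariantY ζ ν) (hfin : ∀ x : ℝ, ν (Set.Iic x) < ⊤) (hinfty : ν Set.univ = ⊤)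
    (x₀ : ℝ)
    (hx₀supp : ∃ ε > 0, ∀ u v : ℝ, x₀ - ε ≤ u → u < v → v ≤ x₀ + ε → 0 < ν (Set.Ioo u v))
    (hnorm : (ν (Set.Iic x₀)).toReal = 1)
 :
    ∃ m : ℝ, 0 < m ∧ ∃ cζ : ℝ, ∃ ρ : ℝ, 0 < ρ ∧ ρ < 1 ∧ ∃ C > 0, ∃ x₁ : ℝ,
      ∀ x ≥ x₁, |(ν (Set.Iic x)).toReal - (m * x + cζ)| ≤ C * Real.exp (-ρ * x) := by
  have hζint : Integrable ζ := by
    by_contra h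
    rw [integral_undef h] at hζprob
    norm_num at hζprob
  obtain ⟨Cz, hCz, d0, hd0, hdec⟩ := aux_zeta_decay ζ hζmeas hζnn hζint hζprob δ hδ Cδ htail θ hθ0 Cθ hHolder
  have hcontζ := aux_holder_cont ζ θ hθ0 Cθ hHolder
  haveI hprob : IsProbabilityMeasure (ll ζ) := ll_prob ζ hζnn hζint hζprob
  set d := min (d0 / 2) (1 / 2) with hd_def
  have hd : 0 < d := by positivity
  have hdd0 : d ≤ d0 / 2 := min_le_left _ _
  have hd2 : d ≤ 1 / 2 := min_le_right _ _
  have hl : Integrable (fun z : ℝ => Real.exp (d * |z|)) (ll ζ) :=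
    ll_exp ζ hζmeas hζnn Cz d0 d (by linarith) hdec
  have hmeanl : ∫ z, z ∂(ll ζ) = 0 := by
    rw [ll_integral ζ hζmeas hζnn, ← hmean]
    congr 1; ext x; ring
  have hzi : Integrable (fun z : ℝ => z) (ll ζ) := aux_int_of_exp hd hl
  have hpos : 0 < ∫ z, max z 0 ∂(ll ζ) := by
    have h1 := ll_pos ζ (fun z => |z|) (fun z => abs_nonneg z) (fun z hz => abs_eq_zero.1 hz) hzi.abs
    have h2 : ∀ z : ℝ, max z 0 = (|z| + z) / 2 := by
      intro z
      rcases le_total 0 z with h | h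
      · rw [max_eq_left h, abs_of_nonneg h]; ring
      · rw [max_eq_right h, abs_of_nonpos h]; ring
    simp only [h2]
    have h3 := integral_add hzi.abs hzi
    rw [integral_div, h3, hmeanl]
    linarith
  have hinv' : ∀ g : ℝ → ℝ≥0∞, Measurable g →
      ∫⁻ z, g z ∂ν = ∫⁻ y, ∫⁻ z, g (z + hY y) ∂(ll ζ) ∂ν := by
    intro g hg
    rw [hinv g hg]
    apply lintegral_congr
    intro y
    have hgm : Measurable fun z => g (z + hY y) := hg.comp (by fun_prop : Measurable fun z => z + hY y)
    have hzm : Measurable fun z => ENNReal.ofReal (ζ z) := by fun_prop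
    unfold ll
    rw [lintegral_withDensity_eq_lintegral_mul _ hzm hgm]
    apply lintegral_congr
    intro z
    simp only [Pi.mul_apply]
    rw [mul_comm]
  obtain ⟨c₀, r₀, a, hc0, hr0, hlow⟩ := ll_low ζ hζnn hcontζ hζprob
  haveI hkfin : IsFiniteMeasure (kap (ll ζ)) := kap_finite (ll ζ) hd hl
  have hkexp := kap_exp (ll ζ) hd hl
  have hz2i : Integrable (fun z : ℝ => z ^ 2) (ll ζ) := by
    refine ((aux_exp_int_le (by linarith : d / 2 ≤ d) _ hl).const_mul (8 / d ^ 2)).mono' (by fun_prop)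
      (ae_of_all _ fun z => ?_)
    rw [Real.norm_eq_abs, abs_of_nonneg (sq_nonneg _)]
    exact aux_sq_exp hd z
  have hk0 : 0 < (kap (ll ζ)).real univ := by
    rw [kap_mass (ll ζ) hd hl]
    have := ll_pos ζ (fun z => z ^ 2) (fun z => sq_nonneg z) (fun z hz => pow_eq_zero_iff (two_ne_zero) |>.1 hz) hz2i
    linarith
  obtain ⟨η0, hη0, hcore⟩ := aux_core (ll ζ) (kap (ll ζ)) (d / 2) (by positivity)
    (aux_exp_int_le (by linarith) _ hl) hkexp hk0 c₀ r₀ a hc0 hr0 hlow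
  set η := min η0 (d / 2) with hη_def
  have hη : 0 < η := by positivity
  have hηd : η ≤ d / 2 := min_le_right _ _
  obtain ⟨Cc, hCc, hcore⟩ := hcore η hη (min_le_left _ _)
  set b := η / 2 with hb_def
  have hb : 0 < b := by positivity
  have hlb := aux_exp_int_le (by linarith : b ≤ d) _ hl
  have hkb := aux_exp_int_le (by linarith : b ≤ d / 2) _ hkexp
  have hT := aux_apriori (ll ζ) d hd hl hmeanl hpos ν hinv' hfin b hb (by linarith) (by linarith)
  obtain ⟨hFc, ⟨B, hB, hFb⟩, Cs, hCs, hs⟩ := aux_Ffacts ζ Cz d0 b d hb (by linarith) hCz (by linarith) hd hd2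
    hdec ν hinv' hfin hT hlb hl
  obtain ⟨M, c', Ck, hM⟩ := kap_main (ll ζ) hd hl hmeanl (FF ν) hFc B b hB hb (by linarith) hFb Cs d hd
    (fun x _ => hs x)
  have hCk : 0 ≤ Ck := by
    have := (abs_nonneg _).trans (hM 0 le_rfl)
    simpa using this
  set k0 := (kap (ll ζ)).real univ with hk0_def
  set m := M / k0 with hm_def
  have hkz : Integrable (fun v : ℝ => v) (kap (ll ζ)) := aux_int_of_exp (by positivity : 0 < d / 2) hkexp
  set μ1 := ∫ v, v ∂(kap (ll ζ)) with hμ1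
  set c := (c' + m * μ1) / k0 with hc_def
  set D : ℝ → ℝ := fun x => FF ν x - (m * x + c) with hD_def
  have hDc : Continuous D := by fun_prop
  set A := B + |m| / b + |c| with hA_def
  have hA : 0 ≤ A := by positivity
  have hDb : ∀ x, |D x| ≤ A * Real.exp (η / 2 * |x|) := by
    intro x
    have h1 := hFb x
    have h2 : |x| ≤ 1 / b * Real.exp (b * |x|) := by
      rw [one_div, inv_mul_eq_div, le_div_iff₀ hb]
      linarith [Real.add_one_le_exp (b * |x|)]
    have h3 : 1 ≤ Real.exp (b * |x|) := Real.one_le_exp (by positivity)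
    calc |D x| ≤ |FF ν x| + |m * x + c| := abs_sub _ _
      _ ≤ |FF ν x| + (|m| * |x| + |c|) := by
        have := abs_add_le (m * x) c
        rw [abs_mul] at this
        linarith
      _ ≤ B * Real.exp (b * |x|) + (|m| * (1 / b * Real.exp (b * |x|)) + |c| * Real.exp (b * |x|)) := by
        have h4 := mul_le_mul_of_nonneg_left h2 (abs_nonneg m)
        have h5 := mul_le_mul_of_nonneg_left h3 (abs_nonneg c)
        linarith
      _ = _ := by rw [hA_def, ← hb_def]; ring
  have hcvκ : ∀ x, cv (kap (ll ζ)) D x = cv (kap (ll ζ)) (FF ν) x - (M * x + c') := by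
    intro x
    have iF := cv_int' (FF ν) hFc hB hFb hb (kap (ll ζ)) hkb x
    have i2 : Integrable (fun v : ℝ => m * (x - v) + c) (kap (ll ζ)) :=
      (((integrable_const x).sub hkz).const_mul m).add (integrable_const c)
    have i3 : Integrable (fun v : ℝ => m * (x - v)) (kap (ll ζ)) := ((integrable_const x).sub hkz).const_mul m
    unfold cv
    rw [integral_sub iF i2, integral_add i3 (integrable_const c), integral_const_mul,
      integral_sub (integrable_const x) hkz]
    simp only [integral_const, smul_eq_mul]
    rw [← hk0_def, ← hμ1]
    have e1 : m * k0 = M := by rw [hm_def]; field_simp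
    have e2 : c * k0 = c' + m * μ1 := by rw [hc_def]; field_simp
    linear_combination (-x) * e1 - e2
  have hcvl : ∀ x, cv (ll ζ) D x - D x = cv (ll ζ) (FF ν) x - FF ν x := by
    intro x
    have iF := cv_int' (FF ν) hFc hB hFb hb (ll ζ) hlb x
    have i2 : Integrable (fun v : ℝ => m * (x - v) + c) (ll ζ) :=
      (((integrable_const x).sub hzi).const_mul m).add (integrable_const c)
    have i3 : Integrable (fun v : ℝ => m * (x - v)) (ll ζ) := ((integrable_const x).sub hzi).const_mul m
    unfold cv
    rw [integral_sub iF i2, integral_add i3 (integrable_const c), integral_const_mul,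
      integral_sub (integrable_const x) hzi, hmeanl]
    simp only [integral_const, smul_eq_mul, probReal_univ, hD_def]
    ring
  have hEl0 : 0 ≤ ∫ z, Real.exp (η / 2 * |z|) ∂(ll ζ) := integral_nonneg fun z => (Real.exp_pos _).le
  have hEk0 : 0 ≤ ∫ z, Real.exp (η / 2 * |z|) ∂(kap (ll ζ)) := integral_nonneg fun z => (Real.exp_pos _).le
  have bκ := cv_bd hη hA hDb (kap (ll ζ)) hkb
  have bl := cv_bd hη hA hDb (ll ζ) hlb
  have wP := aux_weight η d Ck _ hη (by linarith) (cv (kap (ll ζ)) D) hCk (by positivity)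
    (fun x hx => by rw [hcvκ]; exact hM x hx) bκ
  have wS := aux_weight η d Cs (A * (∫ z, Real.exp (η / 2 * |z|) ∂(ll ζ)) + A) hη (by linarith)
    (fun x => cv (ll ζ) D x - D x) hCs (by positivity)
    (fun x hx => by rw [hcvl]; exact hs x)
    (fun x => by
      have h1 := bl x
      have h2 := hDb x
      have h3 := abs_sub (cv (ll ζ) D x) (D x)
      rw [add_mul]
      linarith)
  generalize (Ck ^ 2 + (A * ∫ z, Real.exp (η / 2 * |z|) ∂(kap (ll ζ))) ^ 2) * ∫ x, Real.exp (-η * |x|) = K1 at wP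
  generalize (Cs ^ 2 + (A * (∫ z, Real.exp (η / 2 * |z|) ∂(ll ζ)) + A) ^ 2) * ∫ x, Real.exp (-η * |x|) = K2 at wS
  have hfinal : ∃ C > 0, ∀ x, 0 ≤ x → |D x| ≤ C * Real.exp (-η * x) := by
    refine ⟨|(Cz ^ 2 * (∫ x, Real.exp (-d0 * |x|)) + Cc * (K1 + K2)) / 2| + Cs + 1, by positivity, fun x hx => ?_⟩
    have hS : ∫ y, ww η x y * (D y) ^ 2 ≤ Cc * (K1 + K2) * Real.exp (-(2 * η) * x) := by
      refine (hcore A D x hA hDc hDb).trans ?_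
      rw [mul_assoc]
      apply mul_le_mul_of_nonneg_left _ hCc.le
      rw [add_mul]
      exact add_le_add (wP x) (wS x)
    have h1 := aux_pointwise ζ hζmeas hζnn Cz d0 η A hη (by linarith) hA hCz.le hdec D hDc hDb _ x hS
    have h2 : |cv (ll ζ) D x - D x| ≤ Cs * Real.exp (-d * x) := by rw [hcvl]; exact hs x
    have h3 : Real.exp (-d * x) ≤ Real.exp (-η * x) := Real.exp_le_exp.2 (by nlinarith)
    have h4 : |D x| ≤ |cv (ll ζ) D x| + |cv (ll ζ) D x - D x| := by
      have := abs_sub (cv (ll ζ) D x) (cv (ll ζ) D x - D x)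
      rwa [sub_sub_cancel] at this
    have h5 := mul_le_mul_of_nonneg_left h3 hCs
    have h6 := mul_le_mul_of_nonneg_right
      (le_abs_self ((Cz ^ 2 * (∫ x, Real.exp (-d0 * |x|)) + Cc * (K1 + K2)) / 2)) (Real.exp_pos (-η * x)).le
    have h7 := Real.exp_pos (-η * x)
    rw [add_mul, add_mul]
    linarith
  obtain ⟨C, hC, hfinal⟩ := hfinal
  refine ⟨m, ?_, c, η, hη, by linarith, C, hC, 0, fun x hx => hfinal x hx⟩
  apply aux_mpos ν hfin hinfty m c C
  intro x hx
  have h1 := (abs_le.1 (hfinal x hx)).2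
  have h2 : Real.exp (-η * x) ≤ 1 := Real.exp_le_one_iff.2 (by nlinarith)
  have h3 := mul_le_mul_of_nonneg_left h2 hC.le
  simp only [hD_def] at h1
  linarith
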